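/- Let Q be a regular local ring, f₁,…,f_c a Q-regular sequence, and R = Q/(f₁,…,f_c) (a local complete intersection). Let M, N, L be finitely generated R-modules with N ≠ 0 and Tor_i^R(M,N) = 0 for all i > 0. If Ext^i_R(M ⊗_R N, L) = 0 for all sufficiently large i, then Ext^i_R(M, L) = 0 for all sufficiently large i. -/

import Mathlib

/-!
STATEMENT 0: If `R = Q ⧸ (f₁, …, f_c)` is a local complete intersection (`Q` regular local,
`f` a `Q`-regular sequence), `M, N, L` are finitely generated `R`-modules with `N ≠ 0` and
`Tor_i^R(M, N) = 0` for all `i > 0`, and `Ext^i_R(M ⊗_R N, L) = 0` for `i ≫ 0`, then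
`Ext^i_R(M, L) = 0` for `i ≫ 0`.
-/

open CategoryTheory CategoryTheory.Limits

universe u

/-- A Noetherian local ring is regular if its maximal ideal can be generated by
(Krull dimension of the ring) many elements. -/
def IsRegularLocal (Q : Type u) [CommRing Q] [IsLocalRing Q] : Prop :=
  IsNoetherianRing Q ∧ ∃ s : Finset Q, Ideal.span (s : Set Q) = IsLocalRing.maximalIdeal Q ∧
    (s.card : WithBot ℕ∞) = ringKrullDim Q

/-!
Write `R = Q ⧸ (f₁, …, f_c)`. Let `L → J` be an injective resolution, `P → M` a projective one and
`D` the total complex of `Hom(P, J)`: a complex of injective `R`-modules whose cohomology is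
`Ext_R(M, L)`, hence finitely generated. Vanishing of `Tor_R(M, N)` makes the cohomology of
`Hom(N, D)` equal to `Ext_R(M ⊗ N, L)`, so everything follows from a statement about complexes:
if `D` consists of injectives with finitely generated cohomology and `Hom(N, D)` is eventually
exact, then `D` is eventually exact.

This is reduced to a statement over `Q` by removing the `fᵢ` one at a time. Embed a complex `J` of
injectives over `Q ⧸ (I, x)` in a contractible complex `E` of injectives over `Q ⧸ I`; the cokernel
`C` again consists of injectives over `Q ⧸ I`, is eventually exact if and only if `J` is, and the
exact sequence `0 → J → E[x] → C[x] → J → 0`, which splits degreewise, compares `Hom(N, C)` with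
`Hom(N, J)`.

Over `Q` the maximal ideal is generated by a regular sequence. By Nakayama's lemma, applied to
multiplication by its members, a complex of injectives with finitely generated cohomology is
eventually exact if and only if `Hom(k, -)` of it is, where `k` is the residue field. If `Hom(N, J)`
is eventually exact, then so is the total complex `T` of `Hom(G, J)` for a projective resolution
`G → N`, hence so is `Hom(k, T)`; and a surjection `N → k` makes the cohomology of `Hom(k, J)` a
direct summand of that of `Hom(k, T)`.
-/

section Lifting

variable {R : Type u} [CommRing R] {A B C E P : Type u} [AddCommGroup A] [Module R A]
  [AddCommGroup B] [Module R B] [AddCommGroup C] [Module R C] [AddCommGroup E] [Module R E]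
  [AddCommGroup P] [Module R P]

lemma exists_comp_eq_of_surjective (g : B →ₗ[R] C) (hg : Function.Surjective g) (x : B →ₗ[R] E)
    (hx : ∀ b, g b = 0 → x b = 0) : ∃ y : C →ₗ[R] E, y ∘ₗ g = x := by
  refine ⟨(LinearMap.ker g).liftQ x hx ∘ₗ (g.quotKerEquivOfSurjective hg).symm.toLinearMap, ?_⟩
  ext b
  have : (g.quotKerEquivOfSurjective hg).symm (g b) = (LinearMap.ker g).mkQ b :=
    (LinearEquiv.symm_apply_eq _).2 rfl
  exact congrArg ((LinearMap.ker g).liftQ x hx) this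

lemma exists_comp_eq_of_injective (f : B →ₗ[R] C) (hf : Function.Injective f) (x : A →ₗ[R] C)
    (hx : ∀ a, ∃ b, f b = x a) : ∃ y : A →ₗ[R] B, f ∘ₗ y = x :=
  ⟨x.codRestrictOfInjective f hf hx, x.codRestrictOfInjective_comp f hf hx⟩

lemma exists_comp_eq_of_injective_module [Module.Injective R E] (g : B →ₗ[R] C) (x : B →ₗ[R] E)
    (hx : ∀ b, g b = 0 → x b = 0) : ∃ y : C →ₗ[R] E, y ∘ₗ g = x := by
  obtain ⟨x', hx'⟩ := exists_comp_eq_of_surjective g.rangeRestrict g.surjective_rangeRestrict x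
    fun b hb => hx b (congrArg Subtype.val hb)
  obtain ⟨y, hy⟩ := Module.Injective.out (LinearMap.range g).subtype Subtype.val_injective x'
  exact ⟨y, LinearMap.ext fun b => (hy _).trans (LinearMap.congr_fun hx' b)⟩

lemma exists_comp_eq_of_projective [Module.Projective R P] (f : A →ₗ[R] B) (x : P →ₗ[R] B)
    (hx : ∀ p, ∃ a, f a = x p) : ∃ y : P →ₗ[R] A, f ∘ₗ y = x := by
  obtain ⟨y, hy⟩ := Module.projective_lifting_property f.rangeRestrict
    (x.codRestrict (LinearMap.range f) hx) f.surjective_rangeRestrict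
  exact ⟨y, LinearMap.ext fun p => congrArg Subtype.val (LinearMap.congr_fun hy p)⟩

lemma injective_linearMap_of_flat [Module.Flat R P] [Module.Injective R E] :
    Module.Injective R (P →ₗ[R] E) where
  out X Y _ _ _ _ f hf g := by
    obtain ⟨h, hh⟩ := Module.Injective.out (f.rTensor P)
      (Module.Flat.rTensor_preserves_injective_linearMap f hf) (TensorProduct.lift g)
    exact ⟨TensorProduct.curry h, fun x => LinearMap.ext fun p => hh (x ⊗ₜ p)⟩

lemma fg_range_of_ker_le_ker (φ : A →ₗ[R] B) (ψ : A →ₗ[R] C)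
    (h : LinearMap.ker φ ≤ LinearMap.ker ψ) (hφ : (LinearMap.range φ).FG) :
    (LinearMap.range ψ).FG := by
  obtain ⟨χ, hχ⟩ := exists_comp_eq_of_surjective φ.rangeRestrict φ.surjective_rangeRestrict ψ
    fun a ha => h (congrArg Subtype.val ha)
  have : Module.Finite R (LinearMap.range φ) := Module.Finite.iff_fg.2 hφ
  rw [← hχ, LinearMap.range_comp_of_range_eq_top _ (LinearMap.range_rangeRestrict φ)]
  exact Module.Finite.iff_fg.1 inferInstance

end Lifting

/-! ### Complexes of modules -/

/-- A cochain complex of `R`-modules in non-negative degrees. It is unbundled into its terms and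
differentials, so that cohomology can be treated elementwise and modules over different rings
can be compared. -/
structure ModuleComplex (R : Type u) [CommRing R] where
  X : ℕ → Type u
  [addCommGroup : ∀ n, AddCommGroup (X n)]
  [module : ∀ n, Module R (X n)]
  d : ∀ n, X n →ₗ[R] X (n + 1)
  d_d : ∀ n x, d (n + 1) (d n x) = 0

attribute [instance] ModuleComplex.addCommGroup ModuleComplex.module

namespace ModuleComplex

variable {R : Type u} [CommRing R] {A B C J K : ModuleComplex R} {n : ℕ}

/-- The coboundaries in degree `n`. -/
def coboundaries (J : ModuleComplex R) : ∀ n, Submodule R (J.X n)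
  | 0 => ⊥
  | n + 1 => LinearMap.range (J.d n)

/-- The cocycles in degree `n`. -/
def cocycles (J : ModuleComplex R) (n : ℕ) : Submodule R (J.X n) := LinearMap.ker (J.d n)

/-- Vanishing of the cohomology in degree `n`. -/
def ExactAt (J : ModuleComplex R) (n : ℕ) : Prop := ∀ x : J.X n, J.d n x = 0 → x ∈ J.coboundaries n

/-- Vanishing of the cohomology in large degrees. -/
def EventuallyExact (J : ModuleComplex R) : Prop := ∀ᶠ n in Filter.atTop, J.ExactAt n

/-- Finite generation of the cohomology in degree `n`, seen as a submodule of the quotient by the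
coboundaries. -/
def FiniteAt (J : ModuleComplex R) (n : ℕ) : Prop :=
  ((J.cocycles n).map (J.coboundaries n).mkQ).FG

/-- Finite generation of the cohomology in large degrees. -/
def EventuallyFinite (J : ModuleComplex R) : Prop := ∀ᶠ n in Filter.atTop, J.FiniteAt n

lemma d_eq_zero_of_mem_coboundaries (J : ModuleComplex R) {x : J.X n}
    (hx : x ∈ J.coboundaries n) : J.d n x = 0 := by
  cases n with
  | zero => obtain rfl : x = 0 := hx; exact map_zero _
  | succ n => obtain ⟨y, rfl⟩ := hx; exact J.d_d n y

lemma ExactAt.finiteAt (h : J.ExactAt n) : J.FiniteAt n := by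
  have hbot : (J.cocycles n).map (J.coboundaries n).mkQ = ⊥ := by
    rw [eq_bot_iff]
    rintro _ ⟨x, hx, rfl⟩
    exact (Submodule.Quotient.mk_eq_zero _).2 (h x hx)
  rw [FiniteAt, hbot]
  exact Submodule.fg_bot

/-- The graph `W` exhibits a part of the cohomology of `K` as a quotient of a submodule of that of
`J`. -/
lemma FiniteAt.fg_range_of_correspondence [IsNoetherianRing R] {m : ℕ} (hJ : J.FiniteAt n)
    {W : Type u} [AddCommGroup W] [Module R W] (φ : W →ₗ[R] J.X n) (ψ : W →ₗ[R] K.X m)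
    (hφ : ∀ w, J.d n (φ w) = 0) (h : ∀ w, φ w ∈ J.coboundaries n → ψ w ∈ K.coboundaries m) :
    (LinearMap.range ((K.coboundaries m).mkQ ∘ₗ ψ)).FG := by
  have hrange : (LinearMap.range ((J.coboundaries n).mkQ ∘ₗ φ)).FG := by
    refine Submodule.FG.of_le hJ ?_
    rintro _ ⟨w, rfl⟩
    exact ⟨φ w, hφ w, rfl⟩
  have hker : LinearMap.ker ((J.coboundaries n).mkQ ∘ₗ φ) ≤
      LinearMap.ker ((K.coboundaries m).mkQ ∘ₗ ψ) := fun w hw =>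
    (Submodule.Quotient.mk_eq_zero _).2 (h w ((Submodule.Quotient.mk_eq_zero _).1 hw))
  exact fg_range_of_ker_le_ker _ _ hker hrange

lemma FiniteAt.of_correspondence [IsNoetherianRing R] {m : ℕ} (hJ : J.FiniteAt n) {W : Type u}
    [AddCommGroup W] [Module R W] (φ : W →ₗ[R] J.X n) (ψ : W →ₗ[R] K.X m)
    (hφ : ∀ w, J.d n (φ w) = 0)
    (hψ : ∀ y, K.d m y = 0 → ∃ w, y - ψ w ∈ K.coboundaries m)
    (h : ∀ w, φ w ∈ J.coboundaries n → ψ w ∈ K.coboundaries m) : K.FiniteAt m := by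
  refine (hJ.fg_range_of_correspondence φ ψ hφ h).of_le ?_
  rintro _ ⟨y, hy, rfl⟩
  obtain ⟨w, hw⟩ := hψ y hy
  exact ⟨w, ((Submodule.Quotient.eq _).2 hw).symm⟩

/-- A morphism of complexes. -/
structure Hom (A B : ModuleComplex R) where
  f : ∀ n, A.X n →ₗ[R] B.X n
  comm : ∀ n x, B.d n (f n x) = f (n + 1) (A.d n x)

namespace Hom

variable (φ : Hom A B)

lemma map_mem_coboundaries {x : A.X n} (hx : x ∈ A.coboundaries n) :
    φ.f n x ∈ B.coboundaries n := by
  cases n with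
  | zero => obtain rfl : x = 0 := hx; rw [map_zero]; exact zero_mem _
  | succ n => obtain ⟨y, rfl⟩ := hx; exact ⟨φ.f n y, φ.comm n y⟩

lemma d_map_eq_zero {x : A.X n} (hx : A.d n x = 0) : B.d n (φ.f n x) = 0 := by
  rw [φ.comm, hx, map_zero]

/-- Bijectivity of the map induced on cohomology in degree `n`. -/
structure QuasiIsoAt (n : ℕ) : Prop where
  exists_cocycle : ∀ y, B.d n y = 0 → ∃ x, A.d n x = 0 ∧ y - φ.f n x ∈ B.coboundaries n
  mem_coboundaries : ∀ x, A.d n x = 0 → φ.f n x ∈ B.coboundaries n → x ∈ A.coboundaries n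

namespace QuasiIsoAt

variable {φ}

lemma exactAt_iff (h : φ.QuasiIsoAt n) : B.ExactAt n ↔ A.ExactAt n := by
  constructor
  · exact fun hB x hx => h.mem_coboundaries x hx (hB _ (φ.d_map_eq_zero hx))
  · intro hA y hy
    obtain ⟨x, hx, hxy⟩ := h.exists_cocycle y hy
    exact (Submodule.sub_mem_iff_left _ (φ.map_mem_coboundaries (hA x hx))).1 hxy

lemma finiteAt_iff [IsNoetherianRing R] (h : φ.QuasiIsoAt n) : B.FiniteAt n ↔ A.FiniteAt n := by
  constructor
  · intro hB
    exact hB.of_correspondence (φ.f n ∘ₗ (A.cocycles n).subtype) (A.cocycles n).subtype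
      (fun x => φ.d_map_eq_zero x.2) (fun x hx => ⟨⟨x, hx⟩, by simp⟩)
      fun x hx => h.mem_coboundaries x x.2 hx
  · intro hA
    refine hA.of_correspondence (A.cocycles n).subtype (φ.f n ∘ₗ (A.cocycles n).subtype)
      (fun x => x.2) (fun y hy => ?_) fun x hx => φ.map_mem_coboundaries hx
    obtain ⟨x, hx, hxy⟩ := h.exists_cocycle y hy
    exact ⟨⟨x, hx⟩, hxy⟩

lemma of_bijective (hφ : ∀ n, Function.Bijective (φ.f n)) : φ.QuasiIsoAt n where
  exists_cocycle y hy := by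
    obtain ⟨x, rfl⟩ := (hφ n).2 y
    refine ⟨x, (hφ (n + 1)).1 ?_, by rw [sub_self]; exact zero_mem _⟩
    rw [← φ.comm, hy, map_zero]
  mem_coboundaries x _ h := by
    cases n with
    | zero => exact (hφ 0).1 (Eq.trans h (map_zero _).symm)
    | succ n =>
      obtain ⟨y, hy⟩ := h
      obtain ⟨z, rfl⟩ := (hφ n).2 y
      exact ⟨z, (hφ _).1 (by rw [← hy, φ.comm])⟩

end QuasiIsoAt

end Hom

/-- A degreewise short exact sequence of complexes. -/
structure ShortExact (f : Hom A B) (g : Hom B C) : Prop where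
  injective : ∀ n, Function.Injective (f.f n)
  exact : ∀ n, Function.Exact (f.f n) (g.f n)
  surjective : ∀ n, Function.Surjective (g.f n)

namespace ShortExact

variable {f : Hom A B} {g : Hom B C} (h : ShortExact f g)

include h

lemma exists_map_eq_d {b : B.X n} (hb : C.d n (g.f n b) = 0) :
    ∃ a, A.d (n + 1) a = 0 ∧ f.f (n + 1) a = B.d n b := by
  obtain ⟨a, ha⟩ := (h.exact (n + 1) (B.d n b)).1 (by rw [← g.comm, hb])
  refine ⟨a, h.injective _ ?_, ha⟩
  rw [← f.comm, ha, B.d_d, map_zero]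

lemma exists_sub_mem_range {b : B.X n} (hb : g.f n b ∈ C.coboundaries n) :
    ∃ a, b - f.f n a ∈ B.coboundaries n := by
  obtain ⟨b', hb', hbb'⟩ : ∃ b' ∈ B.coboundaries n, g.f n b' = g.f n b := by
    cases n with
    | zero => exact ⟨0, zero_mem _, (map_zero _).trans (Eq.symm hb)⟩
    | succ n =>
      obtain ⟨c, hc⟩ := hb
      obtain ⟨b', rfl⟩ := h.surjective n c
      exact ⟨B.d n b', ⟨b', rfl⟩, by rw [← g.comm, hc]⟩
  obtain ⟨a, ha⟩ := (h.exact n (b - b')).1 (by rw [map_sub, hbb', sub_self])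
  exact ⟨a, by rwa [ha, sub_sub_cancel]⟩

lemma map_mem_coboundaries_iff {a : A.X (n + 1)} {b : B.X n} (hab : f.f (n + 1) a = B.d n b) :
    a ∈ A.coboundaries (n + 1) ↔ ∃ b', B.d n b' = 0 ∧ g.f n b' = g.f n b := by
  constructor
  · rintro ⟨a', rfl⟩
    refine ⟨b - f.f n a', ?_, ?_⟩
    · rw [map_sub, f.comm, hab, sub_self]
    · rw [map_sub, (h.exact n).apply_apply_eq_zero, sub_zero]
  · rintro ⟨b', hb', hbb'⟩
    obtain ⟨a', ha'⟩ := (h.exact n (b - b')).1 (by rw [map_sub, hbb', sub_self])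
    refine ⟨a', h.injective _ ?_⟩
    rw [← f.comm, ha', map_sub, hb', sub_zero, hab]

lemma exactAt_left (hB : B.ExactAt (n + 1)) (hC : C.ExactAt n) : A.ExactAt (n + 1) := by
  intro a ha
  obtain ⟨b, hb⟩ := hB (f.f (n + 1) a) (f.d_map_eq_zero ha)
  have hgb : C.d n (g.f n b) = 0 := by rw [g.comm, hb, (h.exact _).apply_apply_eq_zero]
  obtain ⟨a', ha'⟩ := h.exists_sub_mem_range (hC _ hgb)
  refine (h.map_mem_coboundaries_iff hb.symm).2
    ⟨b - f.f n a', B.d_eq_zero_of_mem_coboundaries ha', ?_⟩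
  rw [map_sub, (h.exact n).apply_apply_eq_zero, sub_zero]

lemma exactAt_middle (hA : A.ExactAt n) (hC : C.ExactAt n) : B.ExactAt n := by
  intro b hb
  obtain ⟨a, ha⟩ := h.exists_sub_mem_range (hC _ (g.d_map_eq_zero hb))
  have hda : A.d n a = 0 := h.injective _ <| by
    have := B.d_eq_zero_of_mem_coboundaries ha
    rwa [map_sub, hb, zero_sub, neg_eq_zero, f.comm, ← map_zero (f.f (n + 1))] at this
  exact (Submodule.sub_mem_iff_left _ (f.map_mem_coboundaries (hA a hda))).1 ha

lemma exactAt_right (hB : B.ExactAt n) (hA : A.ExactAt (n + 1)) : C.ExactAt n := by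
  intro c hc
  obtain ⟨b, rfl⟩ := h.surjective n c
  obtain ⟨a, ha, hab⟩ := h.exists_map_eq_d hc
  obtain ⟨b', hb', hbb'⟩ := (h.map_mem_coboundaries_iff hab).1 (hA a ha)
  exact hbb' ▸ g.map_mem_coboundaries (hB b' hb')

lemma finiteAt_left [IsNoetherianRing R] (hB : B.FiniteAt (n + 1)) (hC : C.FiniteAt n) :
    A.FiniteAt (n + 1) := by
  let W : Submodule R (B.X n × A.X (n + 1)) :=
    LinearMap.eqLocus (B.d n ∘ₗ LinearMap.fst R _ _) (f.f (n + 1) ∘ₗ LinearMap.snd R _ _)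
  have hW (w : W) : B.d n w.1.1 = f.f (n + 1) w.1.2 := w.2
  have hfg := hC.fg_range_of_correspondence (K := A) (g.f n ∘ₗ LinearMap.fst R _ _ ∘ₗ W.subtype)
    (LinearMap.snd R _ _ ∘ₗ W.subtype)
    (fun w => (g.comm n _).trans
      ((congrArg _ (hW w)).trans ((h.exact _).apply_apply_eq_zero _))) fun w hw => by
      obtain ⟨a, ha⟩ := h.exists_sub_mem_range hw
      refine (h.map_mem_coboundaries_iff (hW w).symm).2
        ⟨w.1.1 - f.f n a, B.d_eq_zero_of_mem_coboundaries ha, ?_⟩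
      rw [map_sub, (h.exact n).apply_apply_eq_zero, sub_zero]
  refine Submodule.fg_of_fg_map_of_fg_inf_ker ((A.coboundaries (n + 1)).mapQ
    (B.coboundaries (n + 1)) (f.f (n + 1)) fun a => f.map_mem_coboundaries) (hB.of_le ?_)
    (hfg.of_le ?_)
  · rintro _ ⟨_, ⟨a, ha, rfl⟩, rfl⟩
    exact ⟨f.f (n + 1) a, f.d_map_eq_zero ha, rfl⟩
  · rintro _ ⟨⟨a, -, rfl⟩, ha⟩
    obtain ⟨b, hb⟩ := (Submodule.Quotient.mk_eq_zero _).1 ha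
    exact ⟨⟨(b, a), hb⟩, rfl⟩

lemma finiteAt_right [IsNoetherianRing R] (hB : B.ExactAt n) (hA : A.FiniteAt (n + 1)) :
    C.FiniteAt n := by
  let W : Submodule R (B.X n × A.X (n + 1)) :=
    LinearMap.eqLocus (B.d n ∘ₗ LinearMap.fst R _ _) (f.f (n + 1) ∘ₗ LinearMap.snd R _ _)
  have hW (w : W) : B.d n w.1.1 = f.f (n + 1) w.1.2 := w.2
  refine hA.of_correspondence (LinearMap.snd R _ _ ∘ₗ W.subtype)
    (g.f n ∘ₗ LinearMap.fst R _ _ ∘ₗ W.subtype) (fun w => ?_) (fun c hc => ?_) fun w hw => ?_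
  · refine h.injective _ ?_
    rw [← f.comm, map_zero, LinearMap.comp_apply, Submodule.subtype_apply, LinearMap.snd_apply,
      ← hW, B.d_d]
  · obtain ⟨b, rfl⟩ := h.surjective n c
    obtain ⟨a, -, hab⟩ := h.exists_map_eq_d hc
    exact ⟨⟨(b, a), hab.symm⟩, by simp⟩
  · obtain ⟨b, hb, hbw⟩ := (h.map_mem_coboundaries_iff (hW w).symm).1 hw
    exact hbw ▸ g.map_mem_coboundaries (hB b hb)

end ShortExact

section HomFrom

variable (N : Type u) [AddCommGroup N] [Module R N] {M : Type u} [AddCommGroup M] [Module R M]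

/-- The complex `Hom(N, J)`. -/
def homFrom (J : ModuleComplex R) : ModuleComplex R where
  X n := N →ₗ[R] J.X n
  d n := (J.d n).compRight R
  d_d n x := LinearMap.ext fun a => J.d_d n (x a)

/-- Functoriality of `Hom(N, J)` in `J`. -/
def Hom.postcomp (φ : Hom A B) : Hom (A.homFrom N) (B.homFrom N) where
  f n := (φ.f n).compRight R
  comm n (x : N →ₗ[R] A.X n) := LinearMap.ext fun a => φ.comm n (x a)

variable {N} in
/-- Functoriality of `Hom(N, J)` in `N`. -/
def precomp (J : ModuleComplex R) (π : N →ₗ[R] M) : Hom (J.homFrom M) (J.homFrom N) where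
  f n := LinearMap.lcomp R (J.X n) π
  comm _ _ := rfl

lemma ShortExact.homFrom {f : Hom A B} {g : Hom B C} (h : ShortExact f g)
    (hg : ∀ n, ∃ s : C.X n →ₗ[R] B.X n, ∀ c, g.f n (s c) = c) :
    ShortExact (f.postcomp N) (g.postcomp N) where
  injective n x y hxy := LinearMap.ext fun a => h.injective n (LinearMap.congr_fun hxy a)
  exact n (x : N →ₗ[R] B.X n) := by
    constructor
    · exact fun hx => exists_comp_eq_of_injective (f.f n) (h.injective n) x fun a =>
        (h.exact n _).1 (LinearMap.congr_fun hx a)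
    · rintro ⟨(y : N →ₗ[R] A.X n), rfl⟩
      exact LinearMap.ext fun a => (h.exact n).apply_apply_eq_zero (y a)
  surjective n (x : N →ₗ[R] C.X n) := by
    obtain ⟨s, hs⟩ := hg n
    exact ⟨s ∘ₗ x, LinearMap.ext fun a => hs (x a)⟩

lemma homFrom_exactAt_of_projective [Module.Projective R N] (h : J.ExactAt (n + 1)) :
    (J.homFrom N).ExactAt (n + 1) := fun (x : N →ₗ[R] J.X (n + 1)) hx =>
  exists_comp_eq_of_projective (J.d n) x fun a => h (x a) (LinearMap.congr_fun hx a)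

variable {N} in
lemma shortExact_precomp {N' : Type u} [AddCommGroup N'] [Module R N'] (J : ModuleComplex R)
    [∀ n, Module.Injective R (J.X n)] {i : N' →ₗ[R] N} {π : N →ₗ[R] M}
    (hi : Function.Injective i) (hiπ : Function.Exact i π) (hπ : Function.Surjective π) :
    ShortExact (J.precomp π) (J.precomp i) where
  injective n := LinearMap.lcomp_injective_of_surjective π hπ
  exact n (x : N →ₗ[R] J.X n) := by
    constructor
    · intro hx
      refine exists_comp_eq_of_surjective π hπ x fun b hb => ?_
      obtain ⟨a, rfl⟩ := (hiπ b).1 hb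
      exact LinearMap.congr_fun hx a
    · rintro ⟨(y : M →ₗ[R] J.X n), rfl⟩
      exact LinearMap.ext fun a => (congrArg y (hiπ.apply_apply_eq_zero a)).trans (map_zero y)
  surjective n (x : N' →ₗ[R] J.X n) := exists_comp_eq_of_injective_module i x fun a ha => by
    rw [hi (ha.trans (map_zero i).symm), map_zero]

end HomFrom

/-- A coaugmentation making a complex into a right resolution of a module. -/
structure IsResolution (J : ModuleComplex R) {L : Type u} [AddCommGroup L] [Module R L]
    (η : L →ₗ[R] J.X 0) : Prop where
  injective : Function.Injective η
  exact_zero : Function.Exact η (J.d 0)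
  exactAt_succ : ∀ n, J.ExactAt (n + 1)

lemma IsResolution.finiteAt_homFrom [IsNoetherianRing R] [∀ n, Module.Injective R (J.X n)]
    {L : Type u} [AddCommGroup L] [Module R L] [Module.Finite R L] {η : L →ₗ[R] J.X 0}
    (hη : J.IsResolution η) (n : ℕ) (M : Type u) [AddCommGroup M] [Module R M]
    [Module.Finite R M] : (J.homFrom M).FiniteAt n := by
  induction n generalizing M with
  | zero =>
    have hfg : (LinearMap.range (((J.homFrom M).coboundaries 0).mkQ ∘ₗ η.compRight R)).FG :=
      Module.Finite.iff_fg.1 inferInstance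
    refine hfg.of_le ?_
    rintro _ ⟨(x : M →ₗ[R] J.X 0), hx, rfl⟩
    obtain ⟨y, rfl⟩ := exists_comp_eq_of_injective η hη.injective x fun a =>
      (hη.exact_zero (x a)).1 (LinearMap.congr_fun hx a)
    exact ⟨y, rfl⟩
  | succ n ih =>
    obtain ⟨k, π, hπ⟩ := Module.Finite.exists_fin' R M
    exact (shortExact_precomp J (LinearMap.ker π).injective_subtype
      (LinearMap.exact_subtype_ker_map π) hπ).finiteAt_left
      (homFrom_exactAt_of_projective _ (hη.exactAt_succ n)).finiteAt (ih _)

end ModuleComplex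

/-! ### Double complexes -/

/-- A first quadrant double complex of `R`-modules, with anticommuting differentials `h` and `v`
raising the first and the second degree. -/
structure DoubleComplex (R : Type u) [CommRing R] where
  X : ℕ → ℕ → Type u
  [addCommGroup : ∀ p q, AddCommGroup (X p q)]
  [module : ∀ p q, Module R (X p q)]
  h : ∀ p q, X p q →ₗ[R] X (p + 1) q
  v : ∀ p q, X p q →ₗ[R] X p (q + 1)
  h_h : ∀ p q x, h (p + 1) q (h p q x) = 0
  v_v : ∀ p q x, v p (q + 1) (v p q x) = 0
  h_v : ∀ p q x, h p (q + 1) (v p q x) + v (p + 1) q (h p q x) = 0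

attribute [instance] DoubleComplex.addCommGroup DoubleComplex.module

namespace DoubleComplex

variable {R : Type u} [CommRing R] (D : DoubleComplex R) {n : ℕ}

/-- The double complex with the two degrees exchanged. -/
def swap : DoubleComplex R where
  X p q := D.X q p
  h p q := D.v q p
  v p q := D.h q p
  h_h p q := D.v_v q p
  v_v p q := D.h_h q p
  h_v p q x := (add_comm _ _).trans (D.h_v q p x)

/-- The degree `n` part of the total complex. -/
abbrev TotX (n : ℕ) : Type u :=
  ∀ x : {x : ℕ × ℕ // x.1 + x.2 = n}, D.X x.1.1 x.1.2

/-- The component in bidegree `(p, q)` of an element of the total complex. -/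
def component (p q : ℕ) (e : p + q = n) : D.TotX n →ₗ[R] D.X p q :=
  LinearMap.proj (φ := fun x : {x : ℕ × ℕ // x.1 + x.2 = n} => D.X x.1.1 x.1.2) ⟨(p, q), e⟩

variable {D} in
lemma totX_ext {z w : D.TotX n} (H : ∀ p q e, D.component p q e z = D.component p q e w) :
    z = w :=
  funext fun ⟨⟨p, q⟩, e⟩ => H p q e

/-- The contribution of `h` to the component of the total differential in bidegree `(p, q)`. -/
def totH (n : ℕ) : ∀ p q, p + q = n + 1 → (D.TotX n →ₗ[R] D.X p q)
  | 0, _, _ => 0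
  | p + 1, q, e => D.h p q ∘ₗ D.component p q (by omega)

/-- The contribution of `v` to the component of the total differential in bidegree `(p, q)`. -/
def totV (n : ℕ) : ∀ p q, p + q = n + 1 → (D.TotX n →ₗ[R] D.X p q)
  | _, 0, _ => 0
  | p, q + 1, e => D.v p q ∘ₗ D.component p q (by omega)

/-- The total differential. -/
def totD (n : ℕ) : D.TotX n →ₗ[R] D.TotX (n + 1) :=
  LinearMap.pi fun x => D.totH n x.1.1 x.1.2 x.2 + D.totV n x.1.1 x.1.2 x.2

lemma component_totD_succ_succ (z : D.TotX n) (p q : ℕ) (e : (p + 1) + (q + 1) = n + 1) :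
    D.component (p + 1) (q + 1) e (D.totD n z) =
      D.h p (q + 1) (D.component p (q + 1) (by omega) z) +
        D.v (p + 1) q (D.component (p + 1) q (by omega) z) := rfl

lemma component_totD_zero_succ (z : D.TotX n) (q : ℕ) (e : 0 + (q + 1) = n + 1) :
    D.component 0 (q + 1) e (D.totD n z) = D.v 0 q (D.component 0 q (by omega) z) :=
  zero_add _

lemma component_totD_succ_zero (z : D.TotX n) (p : ℕ) (e : (p + 1) + 0 = n + 1) :
    D.component (p + 1) 0 e (D.totD n z) = D.h p 0 (D.component p 0 (by omega) z) :=
  add_zero _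

lemma component_succ_totD_of_component_eq_zero (z : D.TotX n) {p : ℕ}
    (hz : ∀ q e, D.component (p + 1) q e z = 0) (q : ℕ) (e : (p + 1) + q = n + 1) :
    D.component (p + 1) q e (D.totD n z) = D.h p q (D.component p q (by omega) z) := by
  rcases q with _ | q
  · exact D.component_totD_succ_zero z p e
  · rw [component_totD_succ_succ, hz, map_zero, add_zero]

lemma totD_totD (z : D.TotX n) : D.totD (n + 1) (D.totD n z) = 0 := by
  refine totX_ext fun p q e => ?_
  rw [map_zero]
  rcases p with _ | _ | p <;> rcases q with _ | _ | q
  · omega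
  · omega
  · rw [component_totD_zero_succ, component_totD_zero_succ, v_v]
  · omega
  · rw [component_totD_succ_succ, component_totD_succ_zero, component_totD_zero_succ, h_v]
  · rw [component_totD_succ_succ, component_totD_succ_succ, component_totD_zero_succ, map_add, v_v,
      add_zero, h_v]
  · rw [component_totD_succ_zero, component_totD_succ_zero, h_h]
  · rw [component_totD_succ_succ, component_totD_succ_succ, component_totD_succ_zero, map_add, h_h,
      zero_add (D.h _ _ _), h_v]
  · rw [component_totD_succ_succ, component_totD_succ_succ, component_totD_succ_succ, map_add,
      map_add, h_h, v_v, zero_add, add_zero, h_v]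

/-- The total complex of a double complex. -/
def tot : ModuleComplex R where
  X := D.TotX
  d := D.totD
  d_d _ := D.totD_totD

/-- The element of the total complex concentrated in bidegree `(p, q)`. -/
def single (p q : ℕ) (e : p + q = n) : D.X p q →ₗ[R] D.TotX n :=
  LinearMap.single R (fun x : {x : ℕ × ℕ // x.1 + x.2 = n} => D.X x.1.1 x.1.2) ⟨(p, q), e⟩

lemma component_single_self (p q : ℕ) (e : p + q = n) (x : D.X p q) :
    D.component p q e (D.single p q e x) = x :=
  Pi.single_eq_same (M := fun x : {x : ℕ × ℕ // x.1 + x.2 = n} => D.X x.1.1 x.1.2) ⟨(p, q), e⟩ x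

lemma component_single_of_ne {p q p' q' : ℕ} (e : p + q = n) (e' : p' + q' = n) (x : D.X p q)
    (hp : p' ≠ p) : D.component p' q' e' (D.single p q e x) = 0 :=
  Pi.single_eq_of_ne (M := fun x : {x : ℕ × ℕ // x.1 + x.2 = n} => D.X x.1.1 x.1.2)
    (i := ⟨(p, q), e⟩) (i' := ⟨(p', q'), e'⟩)
    (fun h => hp (congrArg (fun y => y.1.1) h)) x

lemma component_totD_single_succ {p q : ℕ} (e : p + q = n) (x : D.X p q) :
    D.component (p + 1) q (by omega) (D.totD n (D.single p q e x)) = D.h p q x := by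
  rw [component_succ_totD_of_component_eq_zero _ _
    fun q e' => D.component_single_of_ne e e' x (by omega), component_single_self]

lemma component_totD_single_of_lt {p q p' q' : ℕ} (e : p + q = n) (e' : p' + q' = n + 1)
    (x : D.X p q) (hp : p + 1 < p') :
    D.component p' q' e' (D.totD n (D.single p q e x)) = 0 := by
  obtain ⟨r, rfl⟩ : ∃ r, p' = r + 1 := ⟨p' - 1, by omega⟩
  rw [component_succ_totD_of_component_eq_zero _ _
    fun q e' => D.component_single_of_ne e e' x (by omega),
    component_single_of_ne _ _ _ _ (by omega), map_zero]

/-- Exactness of the rows in positive degrees. -/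
def RowsExact : Prop :=
  ∀ p q (x : D.X (p + 1) q), D.h (p + 1) q x = 0 → ∃ y, D.h p q y = x

variable {D} in
lemma RowsExact.exists_sub_totD_component_eq_zero (hD : D.RowsExact) {k : ℕ} (z : D.TotX (n + 1))
    (hkn : k ≤ n) (hz : ∀ q e, D.component (k + 2) q e (D.totD (n + 1) z) = 0)
    (hk : ∀ p q e, k + 1 < p → D.component p q e z = 0) :
    ∃ y : D.TotX n, ∀ p q e, k < p → D.component p q e (z - D.totD n y) = 0 := by
  obtain ⟨q, hq⟩ : ∃ q, (k + 1) + q = n + 1 := ⟨n - k, by omega⟩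
  have hcocycle : D.h (k + 1) q (D.component (k + 1) q hq z) = 0 := by
    rw [← component_succ_totD_of_component_eq_zero _ _
      (fun q e => hk (k + 2) q e (by omega)) q (by omega), hz]
  obtain ⟨y, hy⟩ := hD k q _ hcocycle
  refine ⟨D.single k q (by omega) y, fun p' q' e' hp => ?_⟩
  rw [map_sub, sub_eq_zero]
  obtain rfl | hpk := Nat.eq_or_lt_of_le (Nat.succ_le_of_lt hp)
  · obtain rfl : q' = q := by omega
    rw [component_totD_single_succ, hy]
  · rw [hk p' q' e' hpk, component_totD_single_of_lt _ _ _ _ hpk]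

variable {D} in
/-- The columns of index `k, k - 1, …, 1` are cleared one after the other. -/
lemma RowsExact.exists_sub_mem_coboundaries (hD : D.RowsExact) (k : ℕ) (z : D.TotX n)
    (hz : ∀ p q e, D.component (p + 1) q e (D.totD n z) = 0)
    (hk : ∀ p q e, k < p → D.component p q e z = 0) :
    ∃ w : D.TotX n, z - w ∈ D.tot.coboundaries n ∧ ∀ p q e, D.component (p + 1) q e w = 0 := by
  induction k generalizing z with
  | zero => exact ⟨z, by rw [sub_self]; exact zero_mem _, fun p q e => hk _ q e (by omega)⟩
  | succ k ih =>
    by_cases hkn : n < k + 1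
    · exact ih z hz fun p q e hp => hk p q e (by omega)
    obtain ⟨m, rfl⟩ : ∃ m, n = m + 1 := ⟨n - 1, by omega⟩
    obtain ⟨y, hy⟩ := hD.exists_sub_totD_component_eq_zero z (by omega) (hz (k + 1)) hk
    obtain ⟨w, hw, hw'⟩ := ih (z - D.totD m y)
      (fun p q e => by rw [map_sub, totD_totD, sub_zero, hz]) hy
    refine ⟨w, ?_, hw'⟩
    have hsum : z - w = (z - D.totD m y - w) + D.totD m y := by abel
    rw [hsum]
    exact add_mem hw ⟨y, rfl⟩

/-- A coaugmentation of the rows of a double complex by a complex `K`, which thus plays the role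
of a column of index `-1`. -/
structure Coaugmentation (K : ModuleComplex R) where
  ε : ∀ q, K.X q →ₗ[R] D.X 0 q
  injective : ∀ q, Function.Injective (ε q)
  exact : ∀ q, Function.Exact (ε q) (D.h 0 q)
  v_ε : ∀ q x, D.v 0 q (ε q x) = ε (q + 1) (K.d q x)

namespace Coaugmentation

variable {D} {K : ModuleComplex R} (a : D.Coaugmentation K)

lemma totD_single_ε (x : K.X n) : D.totD n (D.single 0 n (zero_add n) (a.ε n x)) =
    D.single 0 (n + 1) (zero_add _) (a.ε (n + 1) (K.d n x)) := by
  refine totX_ext fun p q e => ?_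
  rcases p with _ | _ | p
  · obtain rfl : q = n + 1 := by omega
    rw [component_totD_zero_succ, component_single_self, component_single_self, a.v_ε]
  · obtain rfl : q = n := by omega
    rw [component_totD_single_succ, (a.exact q).apply_apply_eq_zero,
      component_single_of_ne _ _ _ _ (by omega)]
  · rw [component_totD_single_of_lt _ _ _ _ (by omega), component_single_of_ne _ _ _ _ (by omega)]

/-- The morphism from the coaugmenting complex to the total complex. -/
def toTot : K.Hom D.tot where
  f n := D.single 0 n (zero_add n) ∘ₗ a.ε n
  comm _ x := a.totD_single_ε x

lemma component_succ_toTot (x : K.X n) (p q : ℕ) (e : (p + 1) + q = n) :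
    D.component (p + 1) q e (a.toTot.f n x) = 0 :=
  D.component_single_of_ne _ _ _ (by omega)

lemma toTot_injective (n : ℕ) : Function.Injective (a.toTot.f n) := by
  intro x y hxy
  apply a.injective
  rw [← D.component_single_self 0 n (zero_add n) (a.ε n x),
    ← D.component_single_self 0 n (zero_add n) (a.ε n y)]
  exact congrArg _ hxy

lemma exists_toTot_eq (w : D.TotX n) (hw : ∀ p q e, D.component (p + 1) q e w = 0)
    (hd : ∀ p q e, D.component (p + 1) q e (D.totD n w) = 0) : ∃ x, a.toTot.f n x = w := by
  have hcocycle : D.h 0 n (D.component 0 n (zero_add n) w) = 0 := by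
    rw [← component_succ_totD_of_component_eq_zero _ _ (hw 0) n (by omega), hd]
  obtain ⟨x, hx⟩ := (a.exact n _).1 hcocycle
  refine ⟨x, totX_ext fun p q e => ?_⟩
  rcases p with _ | p
  · obtain rfl : q = n := by omega
    exact (D.component_single_self _ _ _ _).trans hx
  · rw [component_succ_toTot, hw]

lemma exists_sub_toTot_mem_coboundaries (hD : D.RowsExact) (z : D.tot.X n) (x : K.X (n + 1))
    (hz : D.tot.d n z = a.toTot.f (n + 1) x) :
    ∃ y, K.d n y = x ∧ z - a.toTot.f n y ∈ D.tot.coboundaries n := by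
  have hdz : ∀ p q e, D.component (p + 1) q e (D.tot.d n z) = 0 := fun p q e => by
    rw [hz, component_succ_toTot]
  obtain ⟨(w : D.tot.X n), hzw, hw⟩ :=
    hD.exists_sub_mem_coboundaries n z hdz fun p q e hp => by omega
  have hdw : D.tot.d n z = D.tot.d n w := by
    rw [← sub_eq_zero, ← map_sub]
    exact D.tot.d_eq_zero_of_mem_coboundaries hzw
  obtain ⟨y, rfl⟩ := a.exists_toTot_eq w hw (hdw ▸ hdz)
  refine ⟨y, a.toTot_injective _ ?_, hzw⟩
  rw [← hz, hdw]
  exact (a.toTot.comm n y).symm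

lemma quasiIsoAt_toTot (hD : D.RowsExact) (n : ℕ) : a.toTot.QuasiIsoAt n where
  exists_cocycle z hz :=
    a.exists_sub_toTot_mem_coboundaries hD z 0 (hz.trans (map_zero (a.toTot.f (n + 1))).symm)
  mem_coboundaries x _ hx := by
    cases n with
    | zero => exact a.toTot_injective 0 (Eq.trans hx (map_zero (a.toTot.f 0)).symm)
    | succ n =>
      obtain ⟨z, hz⟩ := hx
      obtain ⟨y, hy, -⟩ := a.exists_sub_toTot_mem_coboundaries hD z x hz
      exact ⟨y, hy⟩

end Coaugmentation

/-- The isomorphism between the total complexes of a double complex and of its transpose. -/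
def totSwap : D.tot.Hom D.swap.tot where
  f n := LinearMap.pi fun x => D.component x.1.2 x.1.1 ((add_comm _ _).trans x.2)
  comm n z := by
    refine totX_ext (D := D.swap) fun p q e => ?_
    rcases p with _ | p <;> rcases q with _ | q
    · omega
    · exact (D.swap.component_totD_zero_succ _ _ _).trans
        (D.component_totD_succ_zero _ _ ((add_comm _ _).trans e)).symm
    · exact (D.swap.component_totD_succ_zero _ _ _).trans
        (D.component_totD_zero_succ _ _ ((add_comm _ _).trans e)).symm
    · exact (D.swap.component_totD_succ_succ _ _ _ _).trans ((add_comm _ _).trans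
        (D.component_totD_succ_succ _ _ _ ((add_comm _ _).trans e)).symm)

lemma tot_exactAt_of_swap (h : D.swap.tot.ExactAt n) : D.tot.ExactAt n := fun z hz =>
  D.swap.totSwap.map_mem_coboundaries (h (D.totSwap.f n z) (D.totSwap.d_map_eq_zero hz))

lemma swap_tot_exactAt_iff : D.swap.tot.ExactAt n ↔ D.tot.ExactAt n :=
  ⟨D.tot_exactAt_of_swap, D.swap.tot_exactAt_of_swap⟩

section HomFrom

variable (A : Type u) [AddCommGroup A] [Module R A]

/-- The double complex `Hom(A, D)`. -/
def homFrom : DoubleComplex R where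
  X p q := A →ₗ[R] D.X p q
  h p q := (D.h p q).compRight R
  v p q := (D.v p q).compRight R
  h_h p q x := LinearMap.ext fun a => D.h_h p q (x a)
  v_v p q x := LinearMap.ext fun a => D.v_v p q (x a)
  h_v p q x := LinearMap.ext fun a => D.h_v p q (x a)

/-- The comparison of `Hom(A, Tot D)` with `Tot Hom(A, D)`. -/
def homFromTot : (D.tot.homFrom A).Hom (D.homFrom A).tot where
  f n := LinearMap.pi fun x => (D.component x.1.1 x.1.2 x.2).compRight R
  comm n (φ : A →ₗ[R] D.TotX n) := by
    refine totX_ext (D := D.homFrom A) fun p q e => LinearMap.ext fun a => ?_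
    rcases p with _ | p <;> rcases q with _ | q
    · omega
    · exact (LinearMap.congr_fun ((D.homFrom A).component_totD_zero_succ _ _ _) a).trans
        (D.component_totD_zero_succ (φ a) _ e).symm
    · exact (LinearMap.congr_fun ((D.homFrom A).component_totD_succ_zero _ _ _) a).trans
        (D.component_totD_succ_zero (φ a) _ e).symm
    · rfl

/-- The comparison of `Tot Hom(A, D)` with `Hom(A, Tot D)`. -/
def totHomFrom : (D.homFrom A).tot.Hom (D.tot.homFrom A) where
  f _ := { toFun := LinearMap.pi, map_add' := fun _ _ => rfl, map_smul' := fun _ _ => rfl }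
  comm n (z : ∀ x : {x : ℕ × ℕ // x.1 + x.2 = n}, A →ₗ[R] D.X x.1.1 x.1.2) :=
    (congrArg LinearMap.pi ((D.homFromTot A).comm n (LinearMap.pi z))).symm

lemma tot_homFrom_exactAt (h : (D.homFrom A).tot.ExactAt n) : (D.tot.homFrom A).ExactAt n :=
  fun x hx => (D.totHomFrom A).map_mem_coboundaries
    (h ((D.homFromTot A).f n x) ((D.homFromTot A).d_map_eq_zero hx))

end HomFrom

end DoubleComplex

/-! ### Balancing `Ext`, and the complex `Hom(N, Hom(P, J))` -/

/-- A projective resolution of the module `M`. It is unbundled like `ModuleComplex`. -/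
structure ModuleResolution (R : Type u) [CommRing R] (M : Type u) [AddCommGroup M]
    [Module R M] where
  X : ℕ → Type u
  [addCommGroup : ∀ n, AddCommGroup (X n)]
  [module : ∀ n, Module R (X n)]
  [projective : ∀ n, Module.Projective R (X n)]
  d : ∀ n, X (n + 1) →ₗ[R] X n
  ε : X 0 →ₗ[R] M
  surjective : Function.Surjective ε
  exact_zero : Function.Exact (d 0) ε
  exact_succ : ∀ n, Function.Exact (d (n + 1)) (d n)

attribute [instance] ModuleResolution.addCommGroup ModuleResolution.module
  ModuleResolution.projective

namespace ModuleResolution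

open ModuleComplex

variable {R : Type u} [CommRing R] {M N : Type u} [AddCommGroup M] [Module R M]
  [AddCommGroup N] [Module R N] (P : ModuleResolution R M) (G : ModuleResolution R N)

/-- The complex `Hom(P, E)`. -/
def homTo (E : Type u) [AddCommGroup E] [Module R E] : ModuleComplex R where
  X n := P.X n →ₗ[R] E
  d n := LinearMap.lcomp R E (P.d n)
  d_d n x := LinearMap.ext fun a =>
    (congrArg x ((P.exact_succ n).apply_apply_eq_zero a)).trans (map_zero x)

lemma isResolution_homTo (E : Type u) [AddCommGroup E] [Module R E] [Module.Injective R E] :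
    (P.homTo E).IsResolution (LinearMap.lcomp R E P.ε) where
  injective := LinearMap.lcomp_injective_of_surjective _ P.surjective
  exact_zero (x : P.X 0 →ₗ[R] E) := by
    constructor
    · intro hx
      refine exists_comp_eq_of_surjective P.ε P.surjective x fun b hb => ?_
      obtain ⟨c, rfl⟩ := (P.exact_zero b).1 hb
      exact LinearMap.congr_fun hx c
    · rintro ⟨(y : M →ₗ[R] E), rfl⟩
      exact LinearMap.ext fun a =>
        (congrArg y (P.exact_zero.apply_apply_eq_zero a)).trans (map_zero y)
  exactAt_succ n (x : P.X (n + 1) →ₗ[R] E) hx := by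
    refine exists_comp_eq_of_injective_module (P.d n) x fun b hb => ?_
    obtain ⟨c, rfl⟩ := (P.exact_succ n b).1 hb
    exact LinearMap.congr_fun hx c

/-- The double complex `Hom(P, J)`. -/
def homDouble (J : ModuleComplex R) : DoubleComplex R where
  X p q := P.X p →ₗ[R] J.X q
  h p q := LinearMap.lcomp R (J.X q) (P.d p)
  v p q := ((-1 : R) ^ p) • (J.d q).compRight R
  h_h p q := (P.homTo (J.X q)).d_d p
  v_v p q x := LinearMap.ext fun a => by simp [J.d_d]
  h_v p q x := LinearMap.ext fun a => by simp [pow_succ]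

lemma v_homDouble_eq_zero_iff {J : ModuleComplex R} {p q : ℕ} {x : P.X p →ₗ[R] J.X q} :
    (P.homDouble J).v p q x = 0 ↔ J.d q ∘ₗ x = 0 :=
  ((isUnit_one (M := R)).neg.pow p).smul_eq_zero (x := J.d q ∘ₗ x)

section Balancing

variable (J : ModuleComplex R) [∀ q, Module.Injective R (J.X q)]

lemma homDouble_rowsExact : (P.homDouble J).RowsExact := fun p q =>
  (P.isResolution_homTo (J.X q)).exactAt_succ p

/-- The coaugmentation of the rows of `Hom(P, J)` by `Hom(M, J)`. -/
def homDoubleCoaugmentation : (P.homDouble J).Coaugmentation (J.homFrom M) where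
  ε q := LinearMap.lcomp R (J.X q) P.ε
  injective q := (P.isResolution_homTo (J.X q)).injective
  exact q := (P.isResolution_homTo (J.X q)).exact_zero
  v_ε q (x : M →ₗ[R] J.X q) := LinearMap.ext fun a =>
    show (-1 : R) ^ 0 • J.d q (x (P.ε a)) = J.d q (x (P.ε a)) by rw [pow_zero, one_smul]

variable {J} {L : Type u} [AddCommGroup L] [Module R L] {η : L →ₗ[R] J.X 0}

omit [∀ q, Module.Injective R (J.X q)]

lemma homDouble_swap_rowsExact (hJ : ∀ n, J.ExactAt (n + 1)) :
    (P.homDouble J).swap.RowsExact := by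
  intro q p (x : P.X p →ₗ[R] J.X (q + 1)) hx
  have hx' : J.d (q + 1) ∘ₗ x = 0 := P.v_homDouble_eq_zero_iff.1 hx
  obtain ⟨y, hy⟩ := exists_comp_eq_of_projective (J.d q) x fun a =>
    hJ q (x a) (LinearMap.congr_fun hx' a)
  refine ⟨((-1 : R) ^ p) • y, LinearMap.ext fun a => ?_⟩
  change (-1 : R) ^ p • J.d q ((-1 : R) ^ p • y a) = x a
  rw [map_smul, smul_smul, ← mul_pow, neg_one_mul, neg_neg, one_pow, one_smul]
  exact LinearMap.congr_fun hy a

/-- The coaugmentation of the columns of `Hom(P, J)` by `Hom(P, L)`, where `J` resolves `L`. -/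
def homDoubleSwapCoaugmentation (hη : J.IsResolution η) :
    (P.homDouble J).swap.Coaugmentation (P.homTo L) where
  ε p := η.compRight R
  injective p x y hxy := LinearMap.ext fun a => hη.injective (LinearMap.congr_fun hxy a)
  exact p (x : P.X p →ₗ[R] J.X 0) := by
    refine P.v_homDouble_eq_zero_iff.trans ⟨fun hx => ?_, ?_⟩
    · exact exists_comp_eq_of_projective η x fun a =>
        (hη.exact_zero (x a)).1 (LinearMap.congr_fun hx a)
    · rintro ⟨(y : P.X p →ₗ[R] L), rfl⟩
      exact LinearMap.ext fun a => hη.exact_zero.apply_apply_eq_zero (y a)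
  v_ε p x := rfl

lemma homTo_exactAt_iff [∀ q, Module.Injective R (J.X q)] (hη : J.IsResolution η) (n : ℕ) :
    (P.homTo L).ExactAt n ↔ (J.homFrom M).ExactAt n := by
  rw [← ((P.homDoubleSwapCoaugmentation hη).quasiIsoAt_toTot
      (P.homDouble_swap_rowsExact hη.exactAt_succ) n).exactAt_iff,
    ← ((P.homDoubleCoaugmentation J).quasiIsoAt_toTot (P.homDouble_rowsExact J) n).exactAt_iff,
    DoubleComplex.swap_tot_exactAt_iff]

end Balancing

/-- This is the vanishing of `Ext(M, Hom(N, E)) = Hom(Tor(M, N), E)`, where the vanishing of `Tor`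
is expressed by a resolution of `N`. -/
lemma homTo_linearMap_exactAt_succ
    (htor : ∀ n, Function.Exact ((G.d (n + 1)).lTensor M) ((G.d n).lTensor M))
    (E : Type u) [AddCommGroup E] [Module R E] [Module.Injective R E] (n : ℕ) :
    (P.homTo (N →ₗ[R] E)).ExactAt (n + 1) := by
  have hinj : ∀ q, Module.Injective R ((G.homTo E).X q) := fun q => injective_linearMap_of_flat
  refine (P.homTo_exactAt_iff (G.isResolution_homTo E) (n + 1)).2 ?_
  intro (x : M →ₗ[R] G.X (n + 1) →ₗ[R] E) hx
  have hcocycle : TensorProduct.lift x ∘ₗ (G.d (n + 1)).lTensor M = 0 :=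
    TensorProduct.ext' fun m g => LinearMap.congr_fun (LinearMap.congr_fun hx m) g
  obtain ⟨y, hy⟩ := exists_comp_eq_of_injective_module ((G.d n).lTensor M)
    (TensorProduct.lift x) fun b hb => by
      obtain ⟨c, rfl⟩ := (htor n b).1 hb
      exact LinearMap.congr_fun hcocycle c
  exact ⟨TensorProduct.curry y, LinearMap.ext fun m => LinearMap.ext fun g =>
    LinearMap.congr_fun hy (m ⊗ₜ g)⟩

section HomTensor

variable {P} {I : ModuleComplex R}

lemma homFrom_homDouble_rowsExact
    (H : ∀ n q, (P.homTo (N →ₗ[R] I.X q)).ExactAt (n + 1)) :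
    ((P.homDouble I).homFrom N).RowsExact := by
  intro p q (x : N →ₗ[R] P.X (p + 1) →ₗ[R] I.X q) hx
  obtain ⟨(y : P.X p →ₗ[R] N →ₗ[R] I.X q), hy⟩ := H p q x.flip (LinearMap.ext fun a =>
    LinearMap.ext fun b => LinearMap.congr_fun (LinearMap.congr_fun hx b) a)
  exact ⟨y.flip, LinearMap.ext fun a => LinearMap.ext fun b =>
    LinearMap.congr_fun (LinearMap.congr_fun hy b) a⟩

lemma homFrom_homFrom_exactAt {n : ℕ} (H : (I.homFrom (TensorProduct R M N)).ExactAt n) :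
    ((I.homFrom M).homFrom N).ExactAt n := by
  intro (x : N →ₗ[R] M →ₗ[R] I.X n) hx
  have h := H (TensorProduct.lift x.flip) (TensorProduct.ext' fun a b =>
    LinearMap.congr_fun (LinearMap.congr_fun hx b) a)
  cases n with
  | zero =>
    have h : TensorProduct.lift x.flip = 0 := h
    exact LinearMap.ext fun a => LinearMap.ext fun b => LinearMap.congr_fun h (b ⊗ₜ a)
  | succ n =>
    obtain ⟨(y : TensorProduct R M N →ₗ[R] I.X n), hy⟩ := h
    exact ⟨(TensorProduct.curry y).flip, LinearMap.ext fun a => LinearMap.ext fun b =>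
      LinearMap.congr_fun hy (b ⊗ₜ a)⟩

variable [∀ n, Module.Injective R (I.X n)]

/-- The coaugmentation of the rows of `Hom(N, Hom(P, I))` by `Hom(N, Hom(M, I))`. -/
def homFromCoaugmentation (P : ModuleResolution R M) (N : Type u) [AddCommGroup N] [Module R N]
    (I : ModuleComplex R) [∀ n, Module.Injective R (I.X n)] :
    ((P.homDouble I).homFrom N).Coaugmentation ((I.homFrom M).homFrom N) where
  ε q := ((P.homDoubleCoaugmentation I).ε q).compRight R
  injective q x y hxy := LinearMap.ext fun a =>
    (P.homDoubleCoaugmentation I).injective q (LinearMap.congr_fun hxy a)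
  exact q (x : N →ₗ[R] P.X 0 →ₗ[R] I.X q) := by
    constructor
    · intro hx
      exact exists_comp_eq_of_injective ((P.homDoubleCoaugmentation I).ε q)
        ((P.homDoubleCoaugmentation I).injective q) x fun a =>
          ((P.homDoubleCoaugmentation I).exact q (x a)).1 (LinearMap.congr_fun hx a)
    · rintro ⟨(y : N →ₗ[R] M →ₗ[R] I.X q), rfl⟩
      exact LinearMap.ext fun a =>
        ((P.homDoubleCoaugmentation I).exact q).apply_apply_eq_zero (y a)
  v_ε q (x : N →ₗ[R] M →ₗ[R] I.X q) := LinearMap.ext fun a =>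
    (P.homDoubleCoaugmentation I).v_ε q (x a)

lemma injective_homDouble_tot (n : ℕ) : Module.Injective R ((P.homDouble I).tot.X n) := by
  have : ∀ x : {x : ℕ × ℕ // x.1 + x.2 = n},
      Module.Injective R ((P.homDouble I).X x.1.1 x.1.2) := fun x => injective_linearMap_of_flat
  exact inferInstanceAs (Module.Injective R ((P.homDouble I).TotX n))

lemma homFrom_homDouble_tot_exactAt
    (htor : ∀ n, Function.Exact ((G.d (n + 1)).lTensor M) ((G.d n).lTensor M)) {n : ℕ}
    (H : (I.homFrom (TensorProduct R M N)).ExactAt n) :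
    ((P.homDouble I).tot.homFrom N).ExactAt n := by
  have hrows := homFrom_homDouble_rowsExact (P := P) fun n q =>
    P.homTo_linearMap_exactAt_succ G htor (I.X q) n
  exact DoubleComplex.tot_homFrom_exactAt _ _
    (((P.homFromCoaugmentation N I).quasiIsoAt_toTot hrows n).exactAt_iff.2
      (homFrom_homFrom_exactAt H))

end HomTensor

end ModuleResolution

/-! ### Change of rings -/

section RelativeInjectivity

variable {Q : Type u} [CommRing Q]

/-- Injectivity relative to the modules killed by `I`, for a module killed by `I`. This amounts to
injectivity over `Q ⧸ I`, but keeps `Q` as the only base ring. -/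
structure IsRelInjective (I : Ideal Q) (E : Type u) [AddCommGroup E] [Module Q E] : Prop where
  le_annihilator : I ≤ Module.annihilator Q E
  out : ∀ ⦃A B : Type u⦄ [AddCommGroup A] [AddCommGroup B] [Module Q A] [Module Q B],
    I ≤ Module.annihilator Q B → ∀ f : A →ₗ[Q] B, Function.Injective f → ∀ g : A →ₗ[Q] E,
      ∃ h : B →ₗ[Q] E, h ∘ₗ f = g

variable {I I' : Ideal Q} {x : Q} {B C E K X Y : Type u} [AddCommGroup B] [Module Q B]
  [AddCommGroup C] [Module Q C] [AddCommGroup E] [Module Q E] [AddCommGroup K] [Module Q K]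
  [AddCommGroup X] [Module Q X] [AddCommGroup Y] [Module Q Y]

lemma sup_span_singleton_le_annihilator_iff :
    I ⊔ Ideal.span {x} ≤ Module.annihilator Q E ↔
      I ≤ Module.annihilator Q E ∧ ∀ e : E, x • e = 0 := by
  rw [sup_le_iff, Ideal.span_singleton_le_iff_mem, Module.mem_annihilator]

open scoped Pointwise in
lemma isWeaklyRegular_quotient_cons {I : Ideal Q} {xs : List Q}
    (h : RingTheory.Sequence.IsWeaklyRegular (Q ⧸ I) (x :: xs)) :
    IsSMulRegular (Q ⧸ I) x ∧
      RingTheory.Sequence.IsWeaklyRegular (Q ⧸ (I ⊔ Ideal.span {x})) xs := by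
  rw [RingTheory.Sequence.isWeaklyRegular_cons_iff] at h
  have hmap : x • (⊤ : Submodule Q (Q ⧸ I)) = Submodule.map I.mkQ (Ideal.span {x}) := by
    rw [← I.range_mkQ, ← Submodule.map_top I.mkQ, ← Submodule.map_pointwise_smul,
      ← Submodule.ideal_span_singleton_smul, smul_eq_mul, Ideal.mul_top]
  exact ⟨h.1, (((Submodule.quotEquivOfEq _ _ hmap).trans
    (Submodule.quotientQuotientEquivQuotientSup I _)).isWeaklyRegular_congr xs).1 h.2⟩

namespace IsRelInjective

lemma bot_iff : IsRelInjective (⊥ : Ideal Q) E ↔ Module.Injective Q E := by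
  constructor
  · refine fun h => ⟨fun A B _ _ _ _ f hf g => ?_⟩
    obtain ⟨k, hk⟩ := h.out bot_le f hf g
    exact ⟨k, LinearMap.congr_fun hk⟩
  · refine fun h => ⟨bot_le, fun A B _ _ _ _ _ f hf g => ?_⟩
    obtain ⟨k, hk⟩ := h.out f hf g
    exact ⟨k, LinearMap.ext hk⟩

lemma of_retract (hY : IsRelInjective I Y) (p : Y →ₗ[Q] X) (s : X →ₗ[Q] Y)
    (hps : p ∘ₗ s = LinearMap.id) : IsRelInjective I X where
  le_annihilator := hY.le_annihilator.trans
    (p.annihilator_le_of_surjective fun y => ⟨s y, LinearMap.congr_fun hps y⟩)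
  out A B _ _ _ _ hB f hf g := by
    obtain ⟨h, hh⟩ := hY.out hB f hf (s ∘ₗ g)
    exact ⟨p ∘ₗ h, by rw [LinearMap.comp_assoc, hh, ← LinearMap.comp_assoc, hps]; rfl⟩

lemma prod (hE : IsRelInjective I E) (hC : IsRelInjective I C) : IsRelInjective I (E × C) where
  le_annihilator := Module.annihilator_prod.ge.trans' (le_inf hE.le_annihilator hC.le_annihilator)
  out A B _ _ _ _ hB f hf g := by
    obtain ⟨h, hh⟩ := hE.out hB f hf (LinearMap.fst Q E C ∘ₗ g)
    obtain ⟨k, hk⟩ := hC.out hB f hf (LinearMap.snd Q E C ∘ₗ g)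
    exact ⟨h.prod k, LinearMap.ext fun a =>
      Prod.ext (LinearMap.congr_fun hh a) (LinearMap.congr_fun hk a)⟩

lemma submodule (hE : IsRelInjective I E) (hI : I ≤ I') (S : Submodule Q E)
    (hS : ∀ e, e ∈ S ↔ ∀ a ∈ I', a • e = 0) : IsRelInjective I' S where
  le_annihilator a ha := Module.mem_annihilator.2 fun e => Subtype.ext ((hS e).1 e.2 a ha)
  out A B _ _ _ _ hB f hf g := by
    obtain ⟨h, hh⟩ := hE.out (hI.trans hB) f hf (S.subtype ∘ₗ g)
    refine ⟨h.codRestrict S fun b => (hS _).2 fun a ha => ?_,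
      LinearMap.ext fun a => Subtype.ext (LinearMap.congr_fun hh a)⟩
    rw [← map_smul, Module.mem_annihilator.1 (hB ha), map_zero]

lemma torsionBy (hE : IsRelInjective I E) (x : Q) :
    IsRelInjective (I ⊔ Ideal.span {x}) (Submodule.torsionBy Q E x) :=
  hE.submodule le_sup_left _ fun e => by
    have : (I ⊔ Ideal.span {x} ≤ LinearMap.ker (LinearMap.toSpanSingleton Q E e)) ↔ x • e = 0 := by
      rw [sup_le_iff, Ideal.span_singleton_le_iff_mem]
      exact and_iff_right fun a ha => Module.mem_annihilator.1 (hE.le_annihilator ha) e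
    rw [Submodule.mem_torsionBy_iff, ← this]
    rfl

lemma exists_embedding (hB : I ≤ Module.annihilator Q B) :
    ∃ (E : ModuleCat.{u} Q) (ι : B →ₗ[Q] E), IsRelInjective I E ∧ Function.Injective ι := by
  obtain ⟨⟨H, _, i, _⟩⟩ := EnoughInjectives.presentation (ModuleCat.of Q B)
  have hi : Function.Injective i.hom := (ModuleCat.mono_iff_injective i).1 inferInstance
  have hH : Module.Injective Q H := Module.injective_module_of_injective_object Q H
  let S := Submodule.torsionBySet Q H (I : Set Q)
  have hS (e : H) : e ∈ S ↔ ∀ a ∈ I, a • e = 0 :=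
    (Submodule.mem_torsionBySet_iff _ _).trans SetCoe.forall
  refine ⟨ModuleCat.of Q S, i.hom.codRestrict S fun b => (hS _).2 fun a ha => ?_,
    (bot_iff.2 hH).submodule bot_le S hS, fun b c hbc => hi (congrArg Subtype.val hbc)⟩
  have hab : a • b = 0 := Module.mem_annihilator.1 (hB ha) b
  exact (map_smul i.hom a b).symm.trans ((congrArg i.hom hab).trans (map_zero i.hom))

lemma of_quotient [Module (Q ⧸ I) E] [IsScalarTower Q (Q ⧸ I) E] [Module.Injective (Q ⧸ I) E] :
    IsRelInjective I E where
  le_annihilator a ha := Module.mem_annihilator.2 fun e => by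
    rw [← algebraMap_smul (Q ⧸ I), Ideal.Quotient.algebraMap_eq,
      Ideal.Quotient.eq_zero_iff_mem.2 ha, zero_smul]
  out A B _ _ _ _ hB f hf g := by
    have hB' := (Module.isTorsionBySet_iff_subset_annihilator Q B).2 hB
    have hA' := (Module.isTorsionBySet_iff_subset_annihilator Q A).2
      (hB.trans (f.annihilator_le_of_injective hf))
    let _ := hB'.module
    let _ := hA'.module
    have : IsScalarTower Q (Q ⧸ I) B := hB'.isScalarTower
    have : IsScalarTower Q (Q ⧸ I) A := hA'.isScalarTower
    have hQ : Function.Surjective (algebraMap Q (Q ⧸ I)) := Ideal.Quotient.mk_surjective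
    obtain ⟨h, hh⟩ := Module.Injective.out (f.extendScalarsOfSurjective hQ) hf
      (g.extendScalarsOfSurjective hQ)
    exact ⟨h.restrictScalars Q, LinearMap.ext hh⟩

lemma exists_smul_eq (hE : IsRelInjective I E) (hx : IsSMulRegular (Q ⧸ I) x) (e : E) :
    ∃ e', x • e' = e := by
  have hI (a) (ha : a ∈ I) : a • e = 0 := Module.mem_annihilator.1 (hE.le_annihilator ha) e
  obtain ⟨h, hh⟩ := hE.out (Ideal.annihilator_quotient (I := I)).ge
    (LinearMap.lsmul Q (Q ⧸ I) x) hx (I.liftQ (LinearMap.toSpanSingleton Q E e) hI)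
  exact ⟨h 1, (map_smul h x 1).symm.trans
    ((LinearMap.congr_fun hh 1).trans (one_smul Q e))⟩

lemma exists_section (hX : IsRelInjective I X) (hY : I ≤ Module.annihilator Q Y) {f : X →ₗ[Q] Y}
    {g : Y →ₗ[Q] C} (hf : Function.Injective f) (hfg : Function.Exact f g)
    (hg : Function.Surjective g) : ∃ s : C →ₗ[Q] Y, ∀ c, g (s c) = c := by
  obtain ⟨r, hr⟩ := hX.out hY f hf LinearMap.id
  obtain ⟨s, hs⟩ := exists_comp_eq_of_surjective g hg (LinearMap.id - f ∘ₗ r) fun y hy => by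
    obtain ⟨a, rfl⟩ := (hfg y).1 hy
    exact sub_eq_zero.2 (congrArg f (LinearMap.congr_fun hr a).symm)
  refine ⟨s, hg.forall.2 fun y => ?_⟩
  rw [← LinearMap.comp_apply s, hs, LinearMap.sub_apply, map_sub, LinearMap.comp_apply f,
    hfg.apply_apply_eq_zero, sub_zero, LinearMap.id_apply]

section Quotient

variable {ι : X →ₗ[Q] E} {p : E →ₗ[Q] C} (hι : Function.Injective ι) (hιp : Function.Exact ι p)
  (hp : Function.Surjective p)

include hι hιp hp

/-- `X` is a retract of `W ⧸ xW`, where `W` is the pullback of `p` along `g`, because `x` is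
regular on `K`; the retraction splits off `X` from `W`. -/
lemma exists_lift (hX : IsRelInjective (I ⊔ Ideal.span {x}) X) (hE : I ≤ Module.annihilator Q E)
    (hK : I ≤ Module.annihilator Q K) (hxK : IsSMulRegular K x) (g : K →ₗ[Q] C) :
    ∃ g' : K →ₗ[Q] E, p ∘ₗ g' = g := by
  let W : Submodule Q (K × E) :=
    LinearMap.eqLocus (g ∘ₗ LinearMap.fst Q K E) (p ∘ₗ LinearMap.snd Q K E)
  have hW (w : W) : g w.1.1 = p w.1.2 := w.2
  let σ : X →ₗ[Q] W := (LinearMap.inr Q K E ∘ₗ ι).codRestrict W fun a =>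
    (map_zero g).trans (hιp.apply_apply_eq_zero a).symm
  have exists_σ (w : W) (hw : w.1.1 = 0) : ∃ a, σ a = w := by
    obtain ⟨a, ha⟩ := (hιp w.1.2).1 (by rw [← hW, hw, map_zero])
    exact ⟨a, Subtype.ext (Prod.ext hw.symm ha)⟩
  let xW := LinearMap.range (LinearMap.lsmul Q W x)
  have hxX := (sup_span_singleton_le_annihilator_iff.1 hX.le_annihilator).2
  have hσ (a : X) (ha : xW.mkQ (σ a) = 0) : a = 0 := by
    obtain ⟨w, hw⟩ := (Submodule.Quotient.mk_eq_zero _).1 ha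
    have hw₀ : x • w.1.1 = 0 := congrArg (fun w : W => w.1.1) hw
    obtain ⟨b, rfl⟩ := exists_σ w (hxK (hw₀.trans (smul_zero x).symm))
    refine hι ((congrArg (fun w : W => w.1.2) hw).symm.trans ?_)
    exact (map_smul ι x b).symm.trans (congrArg ι (hxX b))
  have hWxW : I ⊔ Ideal.span {x} ≤ Module.annihilator Q (W ⧸ xW) := by
    refine sup_span_singleton_le_annihilator_iff.2 ⟨?_, xW.mkQ_surjective.forall.2 fun w =>
      (Submodule.Quotient.mk_eq_zero _).2 ⟨w, rfl⟩⟩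
    exact (Module.annihilator_prod.ge.trans' (le_inf hK hE)).trans
      ((W.subtype.annihilator_le_of_injective W.injective_subtype).trans
        (xW.mkQ.annihilator_le_of_surjective xW.mkQ_surjective))
  obtain ⟨ρ, hρ⟩ := hX.out hWxW (xW.mkQ ∘ₗ σ) ((injective_iff_map_eq_zero _).2 hσ) LinearMap.id
  obtain ⟨g', hg'⟩ := exists_comp_eq_of_surjective (LinearMap.fst Q K E ∘ₗ W.subtype)
    (fun k => let ⟨e, he⟩ := hp (g k); ⟨⟨(k, e), he.symm⟩, rfl⟩)
    (LinearMap.snd Q K E ∘ₗ W.subtype - ι ∘ₗ ρ ∘ₗ xW.mkQ) fun w hw => by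
      obtain ⟨a, rfl⟩ := exists_σ w hw
      exact sub_eq_zero.2 (congrArg ι (LinearMap.congr_fun hρ a).symm)
  refine ⟨g', LinearMap.ext fun k => ?_⟩
  obtain ⟨e, he⟩ := hp (g k)
  have := LinearMap.congr_fun hg' ⟨(k, e), he.symm⟩
  exact (congrArg p this).trans ((map_sub p _ _).trans
    (by rw [LinearMap.comp_apply ι, hιp.apply_apply_eq_zero, sub_zero]; exact he))

lemma of_exact (hE : IsRelInjective I E) (hX : IsRelInjective (I ⊔ Ideal.span {x}) X)
    (hx : IsSMulRegular (Q ⧸ I) x) : IsRelInjective I C := by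
  have hC : Module.IsTorsionBySet Q C I := (Module.isTorsionBySet_iff_subset_annihilator Q C).2
    (hE.le_annihilator.trans (p.annihilator_le_of_surjective hp))
  let _ := hC.module
  have : IsScalarTower Q (Q ⧸ I) C := hC.isScalarTower
  have hQ : Function.Surjective (algebraMap Q (Q ⧸ I)) := Ideal.Quotient.mk_surjective
  have hQI : I ≤ Module.annihilator Q (Q ⧸ I) := Ideal.annihilator_quotient.ge
  have : Module.Injective (Q ⧸ I) C := Module.Baer.injective fun a g => by
    let i := a.subtype.restrictScalars Q
    obtain ⟨g', hg'⟩ := exists_lift hι hιp hp hX hE.le_annihilator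
      (hQI.trans (i.annihilator_le_of_injective a.injective_subtype))
      (fun r s hrs => Subtype.ext (hx (congrArg Subtype.val hrs))) (g.restrictScalars Q)
    obtain ⟨h, hh⟩ := hE.out hQI i a.injective_subtype g'
    exact ⟨(p ∘ₗ h).extendScalarsOfSurjective hQ, fun r hr =>
      (congrArg p (LinearMap.congr_fun hh ⟨r, hr⟩)).trans (LinearMap.congr_fun hg' ⟨r, hr⟩)⟩
  exact .of_quotient

end Quotient

end IsRelInjective

lemma exists_connecting_torsionBy {f : X →ₗ[Q] Y} {g : Y →ₗ[Q] C} (hf : Function.Injective f)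
    (hfg : Function.Exact f g) (hg : Function.Surjective g) (hx : ∀ a : X, x • a = 0) :
    ∃ δ : Submodule.torsionBy Q C x →ₗ[Q] X,
      ∀ y (hy : g y ∈ Submodule.torsionBy Q C x), f (δ ⟨g y, hy⟩) = x • y := by
  let S := (Submodule.torsionBy Q C x).comap g
  obtain ⟨δ', hδ'⟩ := exists_comp_eq_of_injective f hf (LinearMap.lsmul Q Y x ∘ₗ S.subtype)
    fun y => (hfg _).1 ((map_smul g x y.1).trans y.2)
  have hgS : Function.Surjective
      (g.restrict fun y (hy : y ∈ S) => Submodule.mem_comap.1 hy) := fun ⟨c, hc⟩ => by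
    obtain ⟨y, rfl⟩ := hg c
    exact ⟨⟨y, hc⟩, rfl⟩
  obtain ⟨δ, hδ⟩ := exists_comp_eq_of_surjective _ hgS δ' fun y hy => by
    obtain ⟨a, ha⟩ := (hfg y.1).1 (congrArg Subtype.val hy)
    refine hf ((LinearMap.congr_fun hδ' y).trans ?_)
    change x • y.1 = f 0
    rw [← ha, ← map_smul, hx]
  exact ⟨δ, fun y hy => (congrArg f (LinearMap.congr_fun hδ ⟨y, hy⟩)).trans
    (LinearMap.congr_fun hδ' ⟨y, hy⟩)⟩

end RelativeInjectivity

namespace ModuleComplex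

variable {Q : Type u} [CommRing Q] {A B C J : ModuleComplex Q} {n : ℕ} {x : Q}

lemma eventually_atTop_succ {p : ℕ → Prop} :
    (∀ᶠ n in Filter.atTop, p (n + 1)) ↔ ∀ᶠ n in Filter.atTop, p n := by
  rw [← Filter.eventually_map (m := (· + 1)), Filter.map_add_atTop_eq_nat]

/-- The cokernel of a morphism of complexes. -/
def coker (φ : Hom A B) : ModuleComplex Q where
  X n := B.X n ⧸ LinearMap.range (φ.f n)
  d n := Submodule.mapQ _ _ (B.d n) <| by
    rintro _ ⟨a, rfl⟩
    exact ⟨A.d n a, (φ.comm n a).symm⟩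
  d_d n := (Submodule.mkQ_surjective _).forall.2 fun b =>
    congrArg (LinearMap.range (φ.f (n + 1 + 1))).mkQ (B.d_d n b)

/-- The projection onto the cokernel. -/
def cokerMk (φ : Hom A B) : Hom B (coker φ) where
  f n := (LinearMap.range (φ.f n)).mkQ
  comm _ _ := rfl

lemma shortExact_cokerMk {φ : Hom A B} (hφ : ∀ n, Function.Injective (φ.f n)) :
    ShortExact φ (cokerMk φ) where
  injective := hφ
  exact _ _ := Submodule.Quotient.mk_eq_zero _
  surjective _ := Submodule.mkQ_surjective _

section Contractible

variable (E : ℕ → ModuleCat.{u} Q)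

/-- The complex `⨁ₙ (E n ⟶ E n)`, with the `n`-th summand in degrees `n - 1` and `n`. -/
def contractible : ModuleComplex Q where
  X n := E n × E (n + 1)
  d n := LinearMap.inl Q (E (n + 1)) (E (n + 1 + 1)) ∘ₗ LinearMap.snd Q (E n) (E (n + 1))
  d_d _ _ := rfl

variable {E}

/-- The morphism into a complex `⨁ₙ (E n ⟶ E n)` given by maps `J n ⟶ E n`. -/
def toContractible (ι : ∀ n, J.X n →ₗ[Q] E n) : Hom J (contractible E) where
  f n := (ι n).prod (ι (n + 1) ∘ₗ J.d n)
  comm n y := Prod.ext rfl (((congrArg (ι (n + 2)) (J.d_d n y)).trans (map_zero _)).symm)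

lemma homFrom_contractible_exactAt (N : Type u) [AddCommGroup N] [Module Q N] (n : ℕ) :
    ((contractible E).homFrom N).ExactAt (n + 1) := fun (y : N →ₗ[Q] E (n + 1) × E (n + 2)) hy =>
  ⟨LinearMap.inr Q (E n) (E (n + 1)) ∘ₗ LinearMap.fst Q _ _ ∘ₗ y, LinearMap.ext fun a =>
    Prod.ext rfl (congrArg Prod.fst (LinearMap.congr_fun hy a)).symm⟩

lemma contractible_exactAt (n : ℕ) : (contractible E).ExactAt (n + 1) :=
  fun (y : E (n + 1) × E (n + 2)) hy => ⟨((0, y.1) : E n × E (n + 1)),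
    Prod.ext rfl (congrArg Prod.fst hy).symm⟩

end Contractible

/-- The subcomplex of elements killed by `x`. -/
def torsion (x : Q) (J : ModuleComplex Q) : ModuleComplex Q where
  X n := Submodule.torsionBy Q (J.X n) x
  d n := (J.d n).restrict fun y hy => (map_smul (J.d n) x y).symm.trans
    ((congrArg (J.d n) hy).trans (map_zero _))
  d_d n y := Subtype.ext (J.d_d n y)

/-- The inclusion of the `x`-torsion. -/
def torsionSubtype (x : Q) (J : ModuleComplex Q) : Hom (J.torsion x) J where
  f n := (Submodule.torsionBy Q (J.X n) x).subtype
  comm _ _ := rfl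

/-- The morphism into the `x`-torsion induced by a morphism from a complex killed by `x`. -/
def Hom.toTorsion (f : Hom A B) (hA : ∀ n (a : A.X n), x • a = 0) : Hom A (B.torsion x) where
  f n := (f.f n).codRestrict _ fun a => (map_smul (f.f n) x a).symm.trans
    ((congrArg (f.f n) (hA n a)).trans (map_zero _))
  comm n a := Subtype.ext (f.comm n a)

lemma homFrom_torsion_exactAt_iff {N : Type u} [AddCommGroup N] [Module Q N]
    (hN : ∀ a : N, x • a = 0) : ((J.torsion x).homFrom N).ExactAt n ↔ (J.homFrom N).ExactAt n := by
  refine (Hom.QuasiIsoAt.of_bijective (φ := (J.torsionSubtype x).postcomp N) fun n => ⟨?_, ?_⟩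
    ).exactAt_iff.symm
  · exact fun y z hyz => LinearMap.ext fun a => Subtype.ext (LinearMap.congr_fun hyz a)
  · exact fun (y : N →ₗ[Q] J.X n) => ⟨y.codRestrict _ fun a =>
      (map_smul y x a).symm.trans ((congrArg y (hN a)).trans (map_zero y)), rfl⟩

/-- The morphism induced on the `x`-torsion. -/
def Hom.mapTorsion (x : Q) (g : Hom B C) : Hom (B.torsion x) (C.torsion x) where
  f n := (g.f n).restrict fun y hy => (map_smul (g.f n) x y).symm.trans
    ((congrArg (g.f n) hy).trans (map_zero _))
  comm n y := Subtype.ext (g.comm n y.1)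

namespace ShortExact

variable {f : Hom A B} {g : Hom B C} (h : ShortExact f g) (hA : ∀ n (a : A.X n), x • a = 0)

include h hA

/-- Division by `x`, the connecting morphism of the snake lemma for multiplication by `x`. -/
lemma exists_connecting : ∃ δ : Hom (C.torsion x) A,
    ∀ n y (hy : g.f n y ∈ Submodule.torsionBy Q (C.X n) x),
      f.f n (δ.f n ⟨g.f n y, hy⟩) = x • y := by
  choose δ hδ using fun n => exists_connecting_torsionBy (h.injective n) (h.exact n)
    (h.surjective n) (hA n)
  refine ⟨⟨δ, fun n ⟨c, hc⟩ => h.injective _ ?_⟩, hδ⟩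
  obtain ⟨y, rfl⟩ := h.surjective n c
  have hdy : g.f (n + 1) (B.d n y) ∈ Submodule.torsionBy Q (C.X (n + 1)) x := by
    rw [← g.comm]
    exact ((C.torsion x).d n ⟨g.f n y, hc⟩).2
  calc f.f (n + 1) (A.d n (δ n ⟨g.f n y, hc⟩))
      = B.d n (f.f n (δ n ⟨g.f n y, hc⟩)) := (f.comm n _).symm
    _ = B.d n (x • y) := congrArg _ (hδ n y hc)
    _ = x • B.d n y := map_smul _ _ _
    _ = f.f (n + 1) (δ (n + 1) ⟨g.f (n + 1) (B.d n y), hdy⟩) := (hδ _ _ hdy).symm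
    _ = _ := congrArg (fun c => f.f (n + 1) (δ (n + 1) c)) (Subtype.ext (g.comm n y).symm)

/-- The exact sequence `0 → A → B[x] → C[x] → A → 0` of the snake lemma, cut in two. -/
lemma exists_torsion (hB : ∀ n (b : B.X n), ∃ b', x • b' = b) :
    ∃ (p : Hom (coker (f.toTorsion hA)) (C.torsion x)) (δ : Hom (C.torsion x) A),
      ShortExact p δ := by
  obtain ⟨δ, hδ⟩ := h.exists_connecting hA
  let p : Hom (coker (f.toTorsion hA)) (C.torsion x) :=
    { f n := (LinearMap.range ((f.toTorsion hA).f n)).liftQ ((g.mapTorsion x).f n) <| by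
        rintro _ ⟨a, rfl⟩
        exact Subtype.ext ((h.exact n).apply_apply_eq_zero a)
      comm n := (Submodule.mkQ_surjective _).forall.2 ((g.mapTorsion x).comm n) }
  refine ⟨p, δ, fun n => ?_, fun n => ?_, fun n a => ?_⟩
  · refine (injective_iff_map_eq_zero _).2 ((Submodule.mkQ_surjective _).forall.2 fun b hb => ?_)
    obtain ⟨a, ha⟩ := (h.exact n b.1).1 (congrArg Subtype.val hb)
    exact (Submodule.Quotient.mk_eq_zero _).2 ⟨a, Subtype.ext ha⟩
  · rintro ⟨c, hc⟩
    obtain ⟨y, rfl⟩ := h.surjective n c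
    constructor
    · intro hy
      have hxy : x • y = 0 := (hδ n y hc).symm.trans ((congrArg (f.f n) hy).trans (map_zero _))
      exact ⟨Submodule.Quotient.mk ⟨y, hxy⟩, rfl⟩
    · rintro ⟨u, hu⟩
      obtain ⟨⟨y', hy'⟩, rfl⟩ := Submodule.mkQ_surjective _ u
      have hyy' : g.f n y' = g.f n y := congrArg Subtype.val hu
      have hy'c : g.f n y' ∈ Submodule.torsionBy Q (C.X n) x := hyy' ▸ hc
      refine h.injective n (.trans (b := x • y') ?_ (hy'.trans (map_zero _).symm))
      rw [← hδ n y' hy'c]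
      exact congrArg (fun c => f.f n (δ.f n c)) (Subtype.ext hyy'.symm)
  · obtain ⟨y, hy⟩ := hB n (f.f n a)
    have hgy : g.f n y ∈ Submodule.torsionBy Q (C.X n) x :=
      (map_smul _ _ _).symm.trans ((congrArg _ hy).trans ((h.exact n).apply_apply_eq_zero a))
    exact ⟨⟨g.f n y, hgy⟩, h.injective n ((hδ n y hgy).trans hy)⟩

omit hA in
lemma homFrom_eventuallyExact {I : Ideal Q} (hx : IsSMulRegular (Q ⧸ I) x)
    (hA : ∀ n, IsRelInjective (I ⊔ Ideal.span {x}) (A.X n)) (hB : ∀ n, IsRelInjective I (B.X n))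
    (hC : ∀ n, IsRelInjective I (C.X n)) {N : Type u} [AddCommGroup N] [Module Q N]
    (hN : ∀ a : N, x • a = 0) (hNA : (A.homFrom N).EventuallyExact)
    (hNB : (B.homFrom N).EventuallyExact) : (C.homFrom N).EventuallyExact := by
  have hxA (n) := (sup_span_singleton_le_annihilator_iff.1 (hA n).le_annihilator).2
  have s₁ := shortExact_cokerMk (φ := f.toTorsion hxA) fun n a b hab =>
    h.injective n (congrArg Subtype.val hab)
  have split₁ (n) := (hA n).exists_section ((hB n).torsionBy x).le_annihilator (s₁.injective n)
    (s₁.exact n) (s₁.surjective n)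
  obtain ⟨p, δ, s₂⟩ := h.exists_torsion hxA fun n => (hB n).exists_smul_eq hx
  have hU (n) : IsRelInjective (I ⊔ Ideal.span {x}) ((coker (f.toTorsion hxA)).X n) :=
    let ⟨s, hs⟩ := split₁ n
    ((hB n).torsionBy x).of_retract (p := (cokerMk (f.toTorsion hxA)).f n) (s := s)
      (LinearMap.ext hs)
  have split₂ (n) := (hU n).exists_section ((hC n).torsionBy x).le_annihilator (s₂.injective n)
    (s₂.exact n) (s₂.surjective n)
  filter_upwards [hNA, hNB, eventually_atTop_succ.2 hNA] with n hnA hnB hnA'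
  rw [← homFrom_torsion_exactAt_iff hN] at hnB ⊢
  exact (s₂.homFrom N split₂).exactAt_middle ((s₁.homFrom N split₁).exactAt_right hnB hnA') hnA

end ShortExact

lemma exists_isRelInjective_cosyzygy [IsNoetherianRing Q] {I : Ideal Q}
    (hx : IsSMulRegular (Q ⧸ I) x) {N : Type u} [AddCommGroup N] [Module Q N]
    (hN : ∀ a : N, x • a = 0) (hJ : ∀ n, IsRelInjective (I ⊔ Ideal.span {x}) (J.X n))
    (hNJ : (J.homFrom N).EventuallyExact) (hfin : J.EventuallyFinite) :
    ∃ C : ModuleComplex Q, (∀ n, IsRelInjective I (C.X n)) ∧ (C.homFrom N).EventuallyExact ∧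
      C.EventuallyFinite ∧ (C.EventuallyExact → J.EventuallyExact) := by
  choose E ι hE hι using fun n =>
    IsRelInjective.exists_embedding (le_sup_left.trans (hJ n).le_annihilator)
  have hs : ShortExact (toContractible ι) (cokerMk (toContractible ι)) :=
    shortExact_cokerMk fun n a b hab => hι n (congrArg Prod.fst hab)
  have hY (n) : IsRelInjective I ((contractible E).X n) := (hE n).prod (hE (n + 1))
  have hC (n) : IsRelInjective I ((coker (toContractible ι)).X n) :=
    .of_exact (hs.injective n) (hs.exact n) (hs.surjective n) (hY n) (hJ n) hx
  have hYexact : (contractible E).EventuallyExact :=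
    eventually_atTop_succ.1 (.of_forall contractible_exactAt)
  refine ⟨_, hC, hs.homFrom_eventuallyExact hx hJ hY hC hN hNJ
    (eventually_atTop_succ.1 (.of_forall (homFrom_contractible_exactAt N))), ?_, fun hCexact => ?_⟩
  · filter_upwards [hYexact, eventually_atTop_succ.2 hfin] with n using hs.finiteAt_right
  · refine eventually_atTop_succ.1 ?_
    filter_upwards [eventually_atTop_succ.2 hYexact, hCexact] with n using hs.exactAt_left

lemma exists_injective_cosyzygy [IsNoetherianRing Q] {N : Type u} [AddCommGroup N] [Module Q N] :
    ∀ (rs : List Q) (I : Ideal Q) (J : ModuleComplex Q),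
      RingTheory.Sequence.IsWeaklyRegular (Q ⧸ I) rs → (∀ r ∈ rs, ∀ a : N, r • a = 0) →
      (∀ n, IsRelInjective (I ⊔ Ideal.ofList rs) (J.X n)) → (J.homFrom N).EventuallyExact →
      J.EventuallyFinite → ∃ C : ModuleComplex Q, (∀ n, IsRelInjective I (C.X n)) ∧
        (C.homFrom N).EventuallyExact ∧ C.EventuallyFinite ∧
        (C.EventuallyExact → J.EventuallyExact)
  | [], I, J, _, _, hJ, hNJ, hfin => ⟨J, by simpa using hJ, hNJ, hfin, id⟩
  | x :: rs, I, J, hreg, hN, hJ, hNJ, hfin => by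
    obtain ⟨hx, hreg⟩ := isWeaklyRegular_quotient_cons hreg
    rw [List.forall_mem_cons] at hN
    rw [Ideal.ofList_cons, ← sup_assoc] at hJ
    obtain ⟨C, hC, hNC, hCfin, hCJ⟩ :=
      exists_injective_cosyzygy rs _ J hreg hN.2 hJ hNJ hfin
    obtain ⟨D, hD, hND, hDfin, hDC⟩ := exists_isRelInjective_cosyzygy hx hN.1 hC hNC hCfin
    exact ⟨D, hD, hND, hDfin, hCJ ∘ hDC⟩

end ModuleComplex

/-! ### Testing exactness against the residue field -/

namespace ModuleComplex

variable {Q : Type u} [CommRing Q] {A J : ModuleComplex Q} {I : Ideal Q} {n : ℕ} {x : Q}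

section Nakayama

variable [IsLocalRing Q]

lemma ShortExact.exactAt_of_smul {f : Hom A J} {g : Hom J J} (h : ShortExact f g)
    (hg : ∀ n y, g.f n y = x • y) (hx : x ∈ IsLocalRing.maximalIdeal Q) (hA : A.ExactAt (n + 1))
    (hJ : J.FiniteAt n) : J.ExactAt n := by
  have exists_smul_eq (y) (hy : J.d n y = 0) : ∃ z, J.d n z = 0 ∧ x • z = y := by
    obtain ⟨b, rfl⟩ := h.surjective n y
    obtain ⟨a, ha, hab⟩ := h.exists_map_eq_d hy
    obtain ⟨z, hz, hzb⟩ := (h.map_mem_coboundaries_iff hab).1 (hA a ha)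
    exact ⟨z, hz, (hg n z).symm.trans hzb⟩
  have hbot : (J.cocycles n).map (J.coboundaries n).mkQ = ⊥ := by
    refine Submodule.eq_bot_of_le_smul_of_le_jacobson_bot (IsLocalRing.maximalIdeal Q) _ hJ ?_
      (IsLocalRing.maximalIdeal_le_jacobson _)
    rintro _ ⟨y, hy, rfl⟩
    obtain ⟨z, hz, rfl⟩ := exists_smul_eq y hy
    rw [map_smul]
    exact Submodule.smul_mem_smul hx ⟨z, hz, rfl⟩
  exact fun y hy => (Submodule.Quotient.mk_eq_zero _).1
    ((Submodule.eq_bot_iff _).1 hbot _ ⟨y, hy, rfl⟩)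

end Nakayama

lemma exists_shortExact_homFrom_quotient [∀ n, Module.Injective Q (J.X n)]
    (hx : IsSMulRegular (Q ⧸ I) x) :
    ∃ (f : Hom (J.homFrom (Q ⧸ (I ⊔ Ideal.span {x}))) (J.homFrom (Q ⧸ I)))
      (g : Hom (J.homFrom (Q ⧸ I)) (J.homFrom (Q ⧸ I))), ShortExact f g ∧
        ∀ n y, g.f n y = x • y := by
  refine ⟨_, _, shortExact_precomp J (i := LinearMap.lsmul Q (Q ⧸ I) x)
    (π := Submodule.factor le_sup_left) hx (fun q => ?_) (Submodule.factor_surjective le_sup_left),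
    fun n (y : Q ⧸ I →ₗ[Q] J.X n) => LinearMap.ext fun q => map_smul y x q⟩
  obtain ⟨r, rfl⟩ := Submodule.mkQ_surjective _ q
  refine (Submodule.Quotient.mk_eq_zero (I ⊔ Ideal.span {x})).trans ⟨fun hr => ?_, ?_⟩
  · obtain ⟨i, hi, _, hs, rfl⟩ := Submodule.mem_sup.1 hr
    obtain ⟨s, rfl⟩ := Ideal.mem_span_singleton.1 hs
    refine ⟨I.mkQ s, (Submodule.Quotient.eq I).2 ?_⟩
    change x * s - (i + x * s) ∈ I
    rw [sub_add_cancel_right]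
    exact neg_mem hi
  · rintro ⟨q, hq⟩
    obtain ⟨s, rfl⟩ := I.mkQ_surjective q
    have hI : x • s - r ∈ I := (Submodule.Quotient.eq I).1 hq
    rw [← sub_sub_cancel (x • s) r]
    exact sub_mem (Ideal.mem_sup_right (Ideal.mem_span_singleton.2 ⟨s, rfl⟩))
      (Ideal.mem_sup_left hI)

lemma exists_homFrom_quotient_bot_quasiIsoAt (J : ModuleComplex Q) :
    ∃ φ : Hom (J.homFrom (Q ⧸ (⊥ : Ideal Q))) J, ∀ n, φ.QuasiIsoAt n :=
  ⟨{ f _ := LinearMap.applyₗ 1, comm _ _ := rfl }, fun _ => .of_bijective fun n =>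
    ⟨fun _ _ hyz => Submodule.linearMap_qext _ (LinearMap.ext_ring hyz),
      fun y => ⟨Submodule.liftQ ⊥ (LinearMap.toSpanSingleton Q (J.X n) y) bot_le,
        one_smul Q y⟩⟩⟩

lemma eventuallyExact_homFrom_quotient_iff [IsNoetherianRing Q] [IsLocalRing Q]
    [∀ n, Module.Injective Q (J.X n)] : ∀ (rs : List Q) (I : Ideal Q),
      RingTheory.Sequence.IsWeaklyRegular (Q ⧸ I) rs →
      (∀ r ∈ rs, r ∈ IsLocalRing.maximalIdeal Q) → (J.homFrom (Q ⧸ I)).EventuallyFinite →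
      ((J.homFrom (Q ⧸ (I ⊔ Ideal.ofList rs))).EventuallyExact ↔
        (J.homFrom (Q ⧸ I)).EventuallyExact)
  | [], I, _, _, _ => by rw [Ideal.ofList_nil, sup_bot_eq]
  | x :: rs, I, hreg, hrs, hfin => by
    obtain ⟨hx, hreg⟩ := isWeaklyRegular_quotient_cons hreg
    rw [List.forall_mem_cons] at hrs
    obtain ⟨f, g, h, hg⟩ := exists_shortExact_homFrom_quotient (J := J) hx
    have hfin' : (J.homFrom (Q ⧸ (I ⊔ Ideal.span {x}))).EventuallyFinite :=
      eventually_atTop_succ.1 <| by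
        filter_upwards [hfin, eventually_atTop_succ.2 hfin] with n hn hn'
          using h.finiteAt_left hn' hn
    rw [Ideal.ofList_cons, ← sup_assoc,
      eventuallyExact_homFrom_quotient_iff rs _ hreg hrs.2 hfin']
    constructor <;> intro hexact
    · filter_upwards [hfin, eventually_atTop_succ.2 hexact] with n hn hn'
        using h.exactAt_of_smul hg hrs.1 hn' hn
    · refine eventually_atTop_succ.1 ?_
      filter_upwards [hexact, eventually_atTop_succ.2 hexact] with n hn hn'
        using h.exactAt_left hn' hn

lemma eventuallyExact_homFrom_quotient_ofList_iff [IsNoetherianRing Q] [IsLocalRing Q]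
    [∀ n, Module.Injective Q (J.X n)] {rs : List Q}
    (hreg : RingTheory.Sequence.IsWeaklyRegular Q rs)
    (hrs : ∀ r ∈ rs, r ∈ IsLocalRing.maximalIdeal Q) (hJ : J.EventuallyFinite) :
    (J.homFrom (Q ⧸ Ideal.ofList rs)).EventuallyExact ↔ J.EventuallyExact := by
  obtain ⟨φ, hφ⟩ := J.exists_homFrom_quotient_bot_quasiIsoAt
  have h := eventuallyExact_homFrom_quotient_iff (J := J) rs ⊥
    (((Submodule.quotEquivOfEqBot ⊥ rfl).isWeaklyRegular_congr rs).2 hreg) hrs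
    (hJ.mono fun n hn => (hφ n).finiteAt_iff.1 hn)
  rw [bot_sup_eq] at h
  exact h.trans (Filter.eventually_congr (.of_forall fun n => (hφ n).exactAt_iff.symm))

end ModuleComplex

namespace ModuleResolution

open ModuleComplex

variable {Q N : Type u} [CommRing Q] [AddCommGroup N] [Module Q N] {J : ModuleComplex Q} {n : ℕ}

/-- A cocycle `v` of `Hom(K, J)` is sent to `c ↦ p ↦ v (β (ε p) c)` in `Hom(K, Hom(P, J))`, and
evaluation at a preimage of `y` is a one-sided inverse. -/
lemma homFrom_exactAt_of_homFrom_homDouble_tot [∀ n, Module.Injective Q (J.X n)]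
    (P : ModuleResolution Q N) {K : Type u} [AddCommGroup K] [Module Q K]
    (β : N →ₗ[Q] K →ₗ[Q] K) {y : N} (hy : β y = LinearMap.id)
    (H : ((P.homDouble J).tot.homFrom K).ExactAt (n + 1)) : (J.homFrom K).ExactAt (n + 1) := by
  intro (v : K →ₗ[Q] J.X (n + 1)) hv
  let a := P.homDoubleCoaugmentation J
  let w : K →ₗ[Q] N →ₗ[Q] J.X (n + 1) := β.flip.compr₂ v
  obtain ⟨(ψ : K →ₗ[Q] (P.homDouble J).TotX n), hψ⟩ := H (a.toTot.f (n + 1) ∘ₗ w)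
    (LinearMap.ext fun c => a.toTot.d_map_eq_zero (LinearMap.ext fun y =>
      LinearMap.congr_fun hv (β y c)))
  obtain ⟨p, rfl⟩ := P.surjective y
  let ev : (P.X 0 →ₗ[Q] J.X n) →ₗ[Q] J.X n := LinearMap.applyₗ p
  refine ⟨ev ∘ₗ (P.homDouble J).component 0 n (zero_add n) ∘ₗ ψ, LinearMap.ext fun c => ?_⟩
  have h : (P.homDouble J).component 0 (n + 1) (zero_add _) ((P.homDouble J).totD n (ψ c)) =
      (P.homDouble J).component 0 (n + 1) (zero_add _) (a.toTot.f (n + 1) (w c)) :=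
    congrArg _ (LinearMap.congr_fun hψ c)
  rw [DoubleComplex.component_totD_zero_succ] at h
  replace h := h.trans (DoubleComplex.component_single_self ..)
  have hp := LinearMap.congr_fun (show (_ : P.X 0 →ₗ[Q] J.X (n + 1)) = _ from h) p
  let z : P.X 0 →ₗ[Q] J.X n := (P.homDouble J).component 0 n (zero_add n) (ψ c)
  change (-1 : Q) ^ 0 • J.d n (z p) = v (β (P.ε p) c) at hp
  rw [hy, pow_zero, one_smul] at hp
  exact hp

lemma exists_surjective_residueField [IsLocalRing Q] [Module.Finite Q N] [Nontrivial N] :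
    ∃ π : N →ₗ[Q] Q ⧸ IsLocalRing.maximalIdeal Q, Function.Surjective π := by
  obtain ⟨S, hS⟩ := IsCoatomic.exists_coatom (Submodule Q N)
  obtain ⟨I, hI, ⟨e⟩⟩ := isSimpleModule_iff_quot_maximal.1 (isSimpleModule_iff_isCoatom.2 hS)
  obtain rfl := IsLocalRing.eq_maximalIdeal hI
  exact ⟨e.toLinearMap ∘ₗ S.mkQ, e.surjective.comp S.mkQ_surjective⟩

/-- Exactness passes from `Hom(N, J)` to `T = tot Hom(P, J)`, to `Hom(k, T)` for the residue field
`k`, to `Hom(k, J)` by means of a surjection `N → k`, and to `J`. -/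
theorem eventuallyExact_of_homFrom [IsNoetherianRing Q] [IsLocalRing Q]
    [∀ n, Module.Injective Q (J.X n)] [Module.Finite Q N] [Nontrivial N]
    (P : ModuleResolution Q N) {rs : List Q} (hreg : RingTheory.Sequence.IsWeaklyRegular Q rs)
    (hrs : Ideal.ofList rs = IsLocalRing.maximalIdeal Q) (hN : (J.homFrom N).EventuallyExact)
    (hJ : J.EventuallyFinite) : J.EventuallyExact := by
  let T := (P.homDouble J).tot
  have := P.injective_homDouble_tot (I := J)
  have hT : T.EventuallyExact := hN.mono fun n hn =>
    ((P.homDoubleCoaugmentation J).quasiIsoAt_toTot (P.homDouble_rowsExact J) n).exactAt_iff.2 hn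
  have hmem : ∀ r ∈ rs, r ∈ IsLocalRing.maximalIdeal Q :=
    fun r hr => hrs ▸ Ideal.subset_span hr
  have hkT := (eventuallyExact_homFrom_quotient_ofList_iff hreg hmem
    (hT.mono fun _ hn => hn.finiteAt)).2 hT
  obtain ⟨π, hπ⟩ : ∃ π : N →ₗ[Q] Q ⧸ Ideal.ofList rs, Function.Surjective π :=
    hrs ▸ exists_surjective_residueField
  obtain ⟨y, hy⟩ := hπ 1
  refine (eventuallyExact_homFrom_quotient_ofList_iff hreg hmem hJ).1 (eventually_atTop_succ.1 ?_)
  filter_upwards [eventually_atTop_succ.2 hkT] with n hn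
  refine homFrom_exactAt_of_homFrom_homDouble_tot P (y := y) (LinearMap.mul Q _ ∘ₗ π) ?_ hn
  rw [LinearMap.comp_apply, hy]
  exact LinearMap.ext one_mul

end ModuleResolution

/-! ### Regular local rings -/

section RegularLocal

open RingTheory.Sequence IsLocalRing
open scoped Pointwise

variable {Q : Type u} [CommRing Q]

lemma maximalIdeal_notMem_minimalPrimes [IsLocalRing Q] (hdim : 0 < ringKrullDim Q) :
    maximalIdeal Q ∉ minimalPrimes Q := by
  intro h
  rw [← maximalIdeal_height_eq_ringKrullDim, Ideal.height_eq_zero_iff.2 h] at hdim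
  exact lt_irrefl _ hdim

lemma not_maximalIdeal_le_sq [IsLocalRing Q] [IsNoetherianRing Q] (hdim : 0 < ringKrullDim Q) :
    ¬ maximalIdeal Q ≤ maximalIdeal Q ^ 2 := by
  intro hle
  have hbot : maximalIdeal Q = ⊥ :=
    Submodule.eq_bot_of_le_smul_of_le_jacobson_bot (maximalIdeal Q) _ (IsNoetherian.noetherian _)
      (hle.trans (pow_two _).le) (maximalIdeal_le_jacobson _)
  exact maximalIdeal_notMem_minimalPrimes hdim
    ⟨⟨inferInstance, bot_le⟩, fun _ _ _ => hbot ▸ bot_le⟩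

/-- Prime avoidance, with one nonprime ideal. -/
lemma exists_mem_maximalIdeal_notMem [IsLocalRing Q] [IsNoetherianRing Q]
    (hdim : 0 < ringKrullDim Q) :
    ∃ x ∈ maximalIdeal Q, x ∉ maximalIdeal Q ^ 2 ∧ ∀ p ∈ minimalPrimes Q, x ∉ p := by
  by_contra! hcon
  have hcover : (maximalIdeal Q : Set Q) ⊆
      ⋃ I ∈ insert (maximalIdeal Q ^ 2) (minimalPrimes Q), (I : Set Q) := by
    intro x hx
    rw [Set.biUnion_insert]
    by_cases hx2 : x ∈ maximalIdeal Q ^ 2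
    · exact .inl hx2
    · obtain ⟨p, hp, hxp⟩ := hcon x hx hx2
      exact .inr (Set.mem_biUnion hp hxp)
  obtain ⟨I, rfl | hI, hle⟩ := (Ideal.subset_union_prime_finite
    ((minimalPrimes.finite_of_isNoetherianRing Q).insert _) (maximalIdeal Q ^ 2)
    (maximalIdeal Q ^ 2) fun p hp hne _ => (hp.resolve_left hne).1.1).1 hcover
  · exact not_maximalIdeal_le_sq hdim hle
  · refine maximalIdeal_notMem_minimalPrimes hdim ?_
    rwa [hle.antisymm (le_maximalIdeal hI.1.1.ne_top)]

lemma isDomain_of_span_singleton_isPrime [IsLocalRing Q] [IsNoetherianRing Q] {x : Q}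
    (hx : x ∈ maximalIdeal Q) (hmin : ∀ p ∈ minimalPrimes Q, x ∉ p)
    (hprime : (Ideal.span {x}).IsPrime) : IsDomain Q := by
  obtain ⟨p, hp, hle⟩ := Ideal.exists_minimalPrimes_le (I := ⊥) (J := Ideal.span {x}) bot_le
  have hp' : p.IsPrime := hp.1.1
  have hle_smul : p ≤ Ideal.span {x} • p := fun y hy => by
    obtain ⟨a, rfl⟩ := Ideal.mem_span_singleton.1 (hle hy)
    exact Ideal.mul_mem_mul (Ideal.mem_span_singleton_self x)
      ((hp'.mem_or_mem hy).resolve_left (hmin p hp))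
  have hbot : p = ⊥ := Submodule.eq_bot_of_le_smul_of_le_jacobson_bot (Ideal.span {x}) _
    (IsNoetherian.noetherian _) hle_smul
    (((Ideal.span_singleton_le_iff_mem _).2 hx).trans (maximalIdeal_le_jacobson _))
  rw [hbot] at hp'
  exact IsDomain.of_bot_isPrime Q

lemma exists_isUnit_of_notMem_maximalIdeal_sq [IsLocalRing Q] {s : Finset Q}
    (hs : ∀ y ∈ s, y ∈ maximalIdeal Q) {a : Q → Q}
    (ha : ∑ y ∈ s, a y * y ∉ maximalIdeal Q ^ 2) : ∃ y ∈ s, IsUnit (a y) := by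
  by_contra! hcon
  refine ha (Ideal.sum_mem _ fun y hy => ?_)
  rw [pow_two]
  exact Ideal.mul_mem_mul ((mem_maximalIdeal _).2 (hcon y hy)) (hs y hy)

lemma exists_erase_span_sup_eq [IsLocalRing Q] [DecidableEq Q] {s : Finset Q}
    (hs : Ideal.span (s : Set Q) = maximalIdeal Q) {x : Q} (hx : x ∈ maximalIdeal Q)
    (hx2 : x ∉ maximalIdeal Q ^ 2) :
    ∃ y ∈ s, Ideal.span {x} ⊔ Ideal.span (s.erase y : Set Q) = maximalIdeal Q := by
  obtain ⟨a, -, rfl⟩ := Submodule.mem_span_finset.1 (hs ▸ hx)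
  obtain ⟨y, hy, hay⟩ := exists_isUnit_of_notMem_maximalIdeal_sq
    (fun y hy => hs ▸ Ideal.subset_span hy) hx2
  refine ⟨y, hy, le_antisymm (sup_le ((Ideal.span_singleton_le_iff_mem _).2 hx)
    ((Ideal.span_mono (s.erase_subset y)).trans hs.le)) ?_⟩
  rw [← hs, ← Finset.insert_erase hy, Finset.coe_insert, Ideal.span_insert, Finset.insert_erase hy]
  refine sup_le ((Ideal.span_singleton_le_iff_mem _).2 ?_) le_sup_right
  rw [← Ideal.unit_mul_mem_iff_mem _ hay,
    show a y * y = _ from eq_sub_of_add_eq (Finset.add_sum_erase s (fun z => a z • z) hy)]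
  exact sub_mem (Ideal.mem_sup_left (Ideal.mem_span_singleton_self _))
    (Ideal.mem_sup_right (Ideal.sum_mem _ fun z hz =>
      Ideal.mul_mem_left _ _ (Ideal.subset_span hz)))

lemma spanFinrank_maximalIdeal_quotient_add_one_le [IsLocalRing Q] [IsNoetherianRing Q] {x : Q}
    (hx : x ∈ maximalIdeal Q) (hx2 : x ∉ maximalIdeal Q ^ 2) [IsLocalRing (Q ⧸ Ideal.span {x})] :
    (maximalIdeal (Q ⧸ Ideal.span {x})).spanFinrank + 1 ≤ (maximalIdeal Q).spanFinrank := by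
  classical
  obtain ⟨s, hcard, hs⟩ :=
    (IsNoetherian.noetherian (maximalIdeal Q)).exists_span_finset_card_eq_spanFinrank
  obtain ⟨y, hy, hsup⟩ := exists_erase_span_sup_eq hs hx hx2
  have hspan : maximalIdeal (Q ⧸ Ideal.span {x}) =
      (Ideal.span (s.erase y : Set Q)).map (Ideal.Quotient.mk (Ideal.span {x})) := by
    rw [← map_maximalIdeal_of_surjective _ Ideal.Quotient.mk_surjective, ← hsup, Ideal.map_sup,
      Ideal.map_quotient_self, bot_sup_eq]
  calc (maximalIdeal (Q ⧸ Ideal.span {x})).spanFinrank + 1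
    _ ≤ (Ideal.span (s.erase y : Set Q)).spanFinrank + 1 := by
      rw [hspan]
      gcongr
      exact Ideal.spanFinrank_map_le_of_fg _ (IsNoetherian.noetherian _)
    _ ≤ (s.erase y).card + 1 := by
      gcongr
      exact (Submodule.spanFinrank_span_le_ncard_of_finite (Finset.finite_toSet _)).trans_eq
        (Set.ncard_coe_finset _)
    _ = (maximalIdeal Q).spanFinrank := by rw [Finset.card_erase_add_one hy, hcard]

lemma isLocalRing_quotient_span_singleton [IsLocalRing Q] {x : Q} (hx : x ∈ maximalIdeal Q) :
    IsLocalRing (Q ⧸ Ideal.span {x}) := by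
  have : Nontrivial (Q ⧸ Ideal.span {x}) := Ideal.Quotient.nontrivial_iff.2 fun h =>
    (maximalIdeal.isMaximal Q).ne_top (top_le_iff.1 (h ▸ (Ideal.span_singleton_le_iff_mem _).2 hx))
  exact .of_surjective' _ Ideal.Quotient.mk_surjective

lemma isRegularLocalRing_quotient_span_singleton [IsRegularLocalRing Q] {x : Q}
    (hx : x ∈ maximalIdeal Q) (hx2 : x ∉ maximalIdeal Q ^ 2) :
    IsRegularLocalRing (Q ⧸ Ideal.span {x}) := by
  have := isLocalRing_quotient_span_singleton hx
  refine .of_spanFinrank_maximalIdeal_le _ (ENat.WithBot.add_le_add_one_right_iff.1 ?_)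
  calc ((maximalIdeal (Q ⧸ Ideal.span {x})).spanFinrank : WithBot ℕ∞) + 1
    _ ≤ (maximalIdeal Q).spanFinrank := by
      exact_mod_cast spanFinrank_maximalIdeal_quotient_add_one_le hx hx2
    _ = (maximalIdeal Q).height := by
      rw [IsRegularLocalRing.spanFinrank_maximalIdeal, maximalIdeal_height_eq_ringKrullDim]
    _ ≤ ringKrullDim (Q ⧸ Ideal.span {x}) + 1 := Ideal.height_le_ringKrullDim_quotient_add_one hx

lemma exists_isRegularLocalRing_quotient [IsRegularLocalRing Q]
    (h : (maximalIdeal Q).spanFinrank ≠ 0) :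
    ∃ x ∈ maximalIdeal Q, (∀ p ∈ minimalPrimes Q, x ∉ p) ∧
      ∃ _ : IsRegularLocalRing (Q ⧸ Ideal.span {x}),
        (maximalIdeal (Q ⧸ Ideal.span {x})).spanFinrank < (maximalIdeal Q).spanFinrank := by
  have hdim : 0 < ringKrullDim Q := by
    rw [← IsRegularLocalRing.spanFinrank_maximalIdeal]
    exact_mod_cast Nat.pos_of_ne_zero h
  obtain ⟨x, hx, hx2, hmin⟩ := exists_mem_maximalIdeal_notMem hdim
  have := isRegularLocalRing_quotient_span_singleton hx hx2
  exact ⟨x, hx, hmin, this, spanFinrank_maximalIdeal_quotient_add_one_le hx hx2⟩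

theorem isDomain_of_isRegularLocalRing (Q : Type u) [CommRing Q] [IsRegularLocalRing Q] :
    IsDomain Q := by
  by_cases h : (maximalIdeal Q).spanFinrank = 0
  · rw [Submodule.spanFinrank_eq_zero_iff_eq_bot (IsNoetherian.noetherian _)] at h
    have : (⊥ : Ideal Q).IsPrime := h ▸ inferInstance
    exact IsDomain.of_bot_isPrime Q
  · obtain ⟨x, hx, hmin, _, _⟩ := exists_isRegularLocalRing_quotient h
    exact isDomain_of_span_singleton_isPrime hx hmin
      ((Ideal.Quotient.isDomain_iff_prime _).1 (isDomain_of_isRegularLocalRing _))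
termination_by (maximalIdeal Q).spanFinrank

lemma isWeaklyRegular_cons_of_quotient {x : Q} (hx : IsSMulRegular Q x) {rs : List Q}
    (h : IsWeaklyRegular (Q ⧸ Ideal.span {x}) (rs.map (Ideal.Quotient.mk (Ideal.span {x})))) :
    IsWeaklyRegular Q (x :: rs) := by
  have heq : Ideal.span {x} = x • (⊤ : Submodule Q Q) := by
    rw [← Submodule.ideal_span_singleton_smul, smul_eq_mul, Ideal.mul_top]
  have h' : IsWeaklyRegular (Q ⧸ Ideal.span {x}) rs :=
    (isWeaklyRegular_map_algebraMap_iff (Q ⧸ Ideal.span {x}) _ rs).1 h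
  exact (isWeaklyRegular_cons_iff Q x rs).2
    ⟨hx, ((Submodule.quotEquivOfEq _ _ heq).isWeaklyRegular_congr rs).1 h'⟩

theorem exists_isWeaklyRegular_ofList_eq_maximalIdeal (Q : Type u) [CommRing Q]
    [IsRegularLocalRing Q] :
    ∃ rs : List Q, IsWeaklyRegular Q rs ∧ Ideal.ofList rs = maximalIdeal Q := by
  by_cases h : (maximalIdeal Q).spanFinrank = 0
  · rw [Submodule.spanFinrank_eq_zero_iff_eq_bot (IsNoetherian.noetherian _)] at h
    exact ⟨[], .nil Q Q, Ideal.ofList_nil.trans h.symm⟩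
  · obtain ⟨x, hx, hmin, _, _⟩ := exists_isRegularLocalRing_quotient h
    obtain ⟨rs', hreg, hrs⟩ :=
      exists_isWeaklyRegular_ofList_eq_maximalIdeal (Q ⧸ Ideal.span {x})
    have hsurj : Function.Surjective (Ideal.Quotient.mk (Ideal.span {x})) :=
      Ideal.Quotient.mk_surjective
    obtain ⟨rs, rfl⟩ := hsurj.list_map rs'
    have := isDomain_of_isRegularLocalRing Q
    obtain ⟨p, hp, -⟩ := Ideal.exists_minimalPrimes_le (I := ⊥) (J := maximalIdeal Q) bot_le
    have hx0 : x ≠ 0 := fun h0 => hmin p hp (h0 ▸ zero_mem p)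
    refine ⟨x :: rs, isWeaklyRegular_cons_of_quotient (IsSMulRegular.of_ne_zero hx0) hreg, ?_⟩
    rw [← map_maximalIdeal_of_surjective _ hsurj, ← Ideal.map_ofList] at hrs
    replace hrs := congrArg (Ideal.comap (Ideal.Quotient.mk (Ideal.span {x}))) hrs
    rw [Ideal.comap_map_of_surjective' _ hsurj, Ideal.comap_map_of_surjective' _ hsurj,
      Ideal.mk_ker, sup_eq_left.2 ((Ideal.span_singleton_le_iff_mem _).2 hx)] at hrs
    rwa [Ideal.ofList_cons, sup_comm]
termination_by (maximalIdeal Q).spanFinrank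

lemma IsRegularLocal.isRegularLocalRing [IsLocalRing Q] (hQ : IsRegularLocal Q) :
    IsRegularLocalRing Q := by
  obtain ⟨_, s, hs, hcard⟩ := hQ
  refine .of_spanFinrank_maximalIdeal_le Q ?_
  rw [← hs, ← hcard]
  exact_mod_cast (Submodule.spanFinrank_span_le_ncard_of_finite s.finite_toSet).trans_eq
    (Set.ncard_coe_finset s)

end RegularLocal

/-! ### Derived functors of the category of modules -/

section Bridge

variable {R : Type u} [CommRing R]

namespace ModuleResolution

variable {M : ModuleCat.{u} R} (P : ProjectiveResolution M)

/-- The resolution by projective modules underlying a projective resolution in the category of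
modules. -/
noncomputable def ofProjectiveResolution : ModuleResolution R M where
  X n := P.complex.X n
  projective n := (IsProjective.iff_projective (P.complex.X n)).2 (P.projective n)
  d n := (P.complex.d (n + 1) n).hom
  ε := (P.π.f 0).hom
  surjective := (ModuleCat.epi_iff_surjective (P.π.f 0)).1 inferInstance
  exact_zero := (ShortComplex.ShortExact.moduleCat_exact_iff_function_exact
    (ShortComplex.mk _ _ P.complex_d_comp_π_f_zero)).1
      (ShortComplex.exact_of_g_is_cokernel _ P.isColimitCokernelCofork)
  exact_succ n := (ShortComplex.ShortExact.moduleCat_exact_iff_function_exact _).1 (P.exact_succ n)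

lemma isZero_ext_succ_iff_homTo_exactAt (L : ModuleCat.{u} R) (n : ℕ) :
    IsZero (((Ext R (ModuleCat.{u} R) (n + 1)).obj (Opposite.op M)).obj L) ↔
      ((ofProjectiveResolution P).homTo L).ExactAt (n + 1) := by
  rw [(P.isoExt (n + 1) L).isZero_iff, ← HomologicalComplex.exactAt_iff_isZero_homology,
    HomologicalComplex.exactAt_iff' _ n (n + 1) (n + 2) (by simp) (by simp),
    ShortComplex.moduleCat_exact_iff]
  constructor
  · intro H (x : P.complex.X (n + 1) →ₗ[R] L) hx
    obtain ⟨(y : P.complex.X n ⟶ L), hy⟩ := H (ModuleCat.ofHom x) (ModuleCat.hom_ext hx)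
    exact ⟨y.hom, congrArg ModuleCat.Hom.hom hy⟩
  · intro H (x : P.complex.X (n + 1) ⟶ L) hx
    obtain ⟨(y : P.complex.X n →ₗ[R] L), hy⟩ := H x.hom (congrArg ModuleCat.Hom.hom hx)
    exact ⟨ModuleCat.ofHom y, ModuleCat.hom_ext hy⟩

lemma exact_lTensor_of_isZero_tor (A : ModuleCat.{u} R) (n : ℕ)
    (H : IsZero (((Tor (ModuleCat.{u} R) (n + 1)).obj A).obj M)) :
    Function.Exact (((ofProjectiveResolution P).d (n + 1)).lTensor A)
      (((ofProjectiveResolution P).d n).lTensor A) := by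
  have H' := (HomologicalComplex.exactAt_iff_isZero_homology _ _).2
    ((P.isoLeftDerivedObj ((MonoidalCategory.tensoringLeft _).obj A) (n + 1)).isZero_iff.1 H)
  rw [HomologicalComplex.exactAt_iff' _ (n + 2) (n + 1) n (by simp) (by simp)] at H'
  exact (ShortComplex.ShortExact.moduleCat_exact_iff_function_exact _).1 H'

end ModuleResolution

namespace ModuleComplex

lemma exists_injective_isResolution (L : ModuleCat.{u} R) :
    ∃ (J : ModuleComplex R) (η : L →ₗ[R] J.X 0),
      (∀ n, Module.Injective R (J.X n)) ∧ J.IsResolution η := by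
  have I := injectiveResolution L
  refine ⟨{ X := fun n => I.cocomplex.X n
            d := fun n => (I.cocomplex.d n (n + 1)).hom
            d_d := fun n x => LinearMap.congr_fun
              (congrArg ModuleCat.Hom.hom (I.cocomplex.d_comp_d n (n + 1) (n + 2))) x },
    (I.ι.f 0).hom, fun n => ?_, ?_, ?_, fun n => ?_⟩
  · have := I.injective n
    exact Module.injective_module_of_injective_object R (I.cocomplex.X n)
  · exact (ModuleCat.mono_iff_injective (I.ι.f 0)).1 inferInstance
  · exact (ShortComplex.ShortExact.moduleCat_exact_iff_function_exact
      (ShortComplex.mk _ _ I.ι_f_zero_comp_complex_d)).1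
      (ShortComplex.exact_of_f_is_kernel _ I.isLimitKernelFork)
  · exact (ShortComplex.moduleCat_exact_iff _).1 (I.exact_succ n)

lemma IsResolution.eventually_isZero_ext_iff {J : ModuleComplex R} {L : ModuleCat.{u} R}
    {η : L →ₗ[R] J.X 0} [∀ n, Module.Injective R (J.X n)] (hη : J.IsResolution η)
    (M : ModuleCat.{u} R) :
    (∀ᶠ n in Filter.atTop,
        IsZero (((Ext R (ModuleCat.{u} R) n).obj (Opposite.op M)).obj L)) ↔
      (J.homFrom M).EventuallyExact := by
  rw [EventuallyExact, ← eventually_atTop_succ,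
    ← eventually_atTop_succ (p := (J.homFrom M).ExactAt)]
  refine Filter.eventually_congr (.of_forall fun n => ?_)
  rw [ModuleResolution.isZero_ext_succ_iff_homTo_exactAt (projectiveResolution M),
    ModuleResolution.homTo_exactAt_iff _ hη]

end ModuleComplex

end Bridge

namespace ModuleComplex

section RestrictScalars

variable {R : Type u} [CommRing R] (Q : Type u) [CommRing Q] [Algebra Q R] (J : ModuleComplex R)
  [∀ n, Module Q (J.X n)] [∀ n, IsScalarTower Q R (J.X n)] {n : ℕ}

/-- Restriction of scalars of a complex. -/
def restrictScalars : ModuleComplex Q where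
  X n := J.X n
  d n := (J.d n).restrictScalars Q
  d_d := J.d_d

lemma coboundaries_restrictScalars (n : ℕ) :
    (J.restrictScalars Q).coboundaries n = (J.coboundaries n).restrictScalars Q := by
  cases n <;> rfl

lemma restrictScalars_exactAt_iff : (J.restrictScalars Q).ExactAt n ↔ J.ExactAt n := by
  rw [ExactAt, coboundaries_restrictScalars]
  rfl

variable {J} (hQ : Function.Surjective (algebraMap Q R))
include hQ

lemma FiniteAt.restrictScalars (h : J.FiniteAt n) : (J.restrictScalars Q).FiniteAt n := by
  rw [FiniteAt, coboundaries_restrictScalars]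
  have hmap : ((J.restrictScalars Q).cocycles n).map
      ((J.coboundaries n).restrictScalars Q).mkQ =
      (((J.cocycles n).map (J.coboundaries n).mkQ).restrictScalars Q).map
        (Submodule.Quotient.restrictScalarsEquiv Q (J.coboundaries n)).symm.toLinearMap := by
    ext z
    constructor
    · rintro ⟨x, hx, rfl⟩
      exact ⟨_, ⟨x, hx, rfl⟩, rfl⟩
    · rintro ⟨_, ⟨x, hx, rfl⟩, rfl⟩
      exact ⟨x, hx, rfl⟩
  have hfg := (Submodule.FG.restrictScalars_of_surjective (R := Q) h hQ).map
    (Submodule.Quotient.restrictScalarsEquiv Q (J.coboundaries n)).symm.toLinearMap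
  rw [← hmap] at hfg
  exact hfg

lemma ExactAt.homFrom_restrictScalars {N : Type u} [AddCommGroup N] [Module R N] [Module Q N]
    [IsScalarTower Q R N] (h : (J.homFrom N).ExactAt n) :
    ((J.restrictScalars Q).homFrom N).ExactAt n := by
  intro (x : N →ₗ[Q] J.X n) hx
  have hx' := h (x.extendScalarsOfSurjective hQ)
    (LinearMap.ext fun a => LinearMap.congr_fun hx a)
  cases n with
  | zero => exact LinearMap.ext fun a => LinearMap.congr_fun hx' a
  | succ n =>
    obtain ⟨(y : N →ₗ[R] J.X n), hy⟩ := hx'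
    exact ⟨y.restrictScalars Q, LinearMap.ext fun a => LinearMap.congr_fun hy a⟩

end RestrictScalars

theorem eventuallyExact_of_homFrom_of_isRegularLocalRing {Q : Type u} [CommRing Q]
    [IsRegularLocalRing Q] {f : List Q} (hf : RingTheory.Sequence.IsWeaklyRegular Q f)
    {J : ModuleComplex (Q ⧸ Ideal.ofList f)} [∀ n, Module.Injective (Q ⧸ Ideal.ofList f) (J.X n)]
    (N : Type u) [AddCommGroup N] [Module (Q ⧸ Ideal.ofList f) N]
    [Module.Finite (Q ⧸ Ideal.ofList f) N] [Nontrivial N]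
    (hN : (J.homFrom N).EventuallyExact) (hJ : J.EventuallyFinite) : J.EventuallyExact := by
  have hsurj : Function.Surjective (algebraMap Q (Q ⧸ Ideal.ofList f)) :=
    Ideal.Quotient.mk_surjective
  let _ : ∀ n, Module Q (J.X n) := fun n => Module.compHom _ (algebraMap Q (Q ⧸ Ideal.ofList f))
  have : ∀ n, IsScalarTower Q (Q ⧸ Ideal.ofList f) (J.X n) := fun n =>
    IsScalarTower.of_algebraMap_smul fun _ _ => rfl
  let _ : Module Q N := Module.compHom _ (algebraMap Q (Q ⧸ Ideal.ofList f))
  have : IsScalarTower Q (Q ⧸ Ideal.ofList f) N := IsScalarTower.of_algebraMap_smul fun _ _ => rfl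
  have : Module.Finite Q N := Module.Finite.trans (Q ⧸ Ideal.ofList f) N
  have hfN : ∀ r ∈ f, ∀ a : N, r • a = 0 := fun r hr a => by
    have hr' : r ∈ Ideal.ofList f := Ideal.subset_span hr
    rw [← algebraMap_smul (Q ⧸ Ideal.ofList f) r a, Ideal.Quotient.algebraMap_eq,
      Ideal.Quotient.eq_zero_iff_mem.2 hr', zero_smul]
  have hrel : ∀ n, IsRelInjective (⊥ ⊔ Ideal.ofList f) (J.X n) := fun n => by
    rw [bot_sup_eq]
    exact .of_quotient
  obtain ⟨C, hC, hNC, hCfin, hCJ⟩ := exists_injective_cosyzygy f ⊥ (J.restrictScalars Q)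
    (((Submodule.quotEquivOfEqBot ⊥ rfl).isWeaklyRegular_congr f).2 hf) hfN hrel
    (hN.mono fun _ => .homFrom_restrictScalars Q hsurj) (hJ.mono fun _ => .restrictScalars Q hsurj)
  have : ∀ n, Module.Injective Q (C.X n) := fun n => IsRelInjective.bot_iff.1 (hC n)
  obtain ⟨rs, hrs, hmax⟩ := exists_isWeaklyRegular_ofList_eq_maximalIdeal Q
  have P := ModuleResolution.ofProjectiveResolution (projectiveResolution (ModuleCat.of Q N))
  exact (hCJ (P.eventuallyExact_of_homFrom hrs hmax hNC hCfin)).mono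
    fun _ => (J.restrictScalars_exactAt_iff Q).1

end ModuleComplex

theorem stmt_0 (Q : Type u) [CommRing Q] [IsLocalRing Q] (hQ : IsRegularLocal Q)
    (f : List Q) (hf : RingTheory.Sequence.IsRegular Q f)
    (M N L : ModuleCat.{u} (Q ⧸ Ideal.ofList f))
    [Module.Finite (Q ⧸ Ideal.ofList f) M] [Module.Finite (Q ⧸ Ideal.ofList f) N]
    [Module.Finite (Q ⧸ Ideal.ofList f) L]
    (hN : Nontrivial N)
    (htor : ∀ i : ℕ, 0 < i →
      IsZero (((Tor (ModuleCat.{u} (Q ⧸ Ideal.ofList f)) i).obj M).obj N))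
    (hext : ∃ n : ℕ, ∀ i : ℕ, n ≤ i →
      IsZero (((Ext (Q ⧸ Ideal.ofList f) (ModuleCat.{u} (Q ⧸ Ideal.ofList f)) i).obj
        (Opposite.op (MonoidalCategory.tensorObj M N))).obj L)) :
    ∃ n : ℕ, ∀ i : ℕ, n ≤ i →
      IsZero (((Ext (Q ⧸ Ideal.ofList f) (ModuleCat.{u} (Q ⧸ Ideal.ofList f)) i).obj
        (Opposite.op M)).obj L) := by
  have : IsRegularLocalRing Q := hQ.isRegularLocalRing
  obtain ⟨J, η, hJ, hη⟩ := ModuleComplex.exists_injective_isResolution L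
  let P := ModuleResolution.ofProjectiveResolution (projectiveResolution M)
  let G := ModuleResolution.ofProjectiveResolution (projectiveResolution N)
  have hD (n : ℕ) : (P.homDoubleCoaugmentation J).toTot.QuasiIsoAt n :=
    (P.homDoubleCoaugmentation J).quasiIsoAt_toTot (P.homDouble_rowsExact J) n
  have hND : ((P.homDouble J).tot.homFrom N).EventuallyExact := by
    have hMN := (hη.eventually_isZero_ext_iff _).1 (Filter.eventually_atTop.2 hext)
    exact hMN.mono fun n => P.homFrom_homDouble_tot_exactAt G fun k =>
      ModuleResolution.exact_lTensor_of_isZero_tor _ M k (htor _ k.succ_pos)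
  have hDfin : (P.homDouble J).tot.EventuallyFinite :=
    .of_forall fun n => (hD n).finiteAt_iff.2 (hη.finiteAt_homFrom n M)
  have := P.injective_homDouble_tot (I := J)
  have hDexact : (P.homDouble J).tot.EventuallyExact :=
    ModuleComplex.eventuallyExact_of_homFrom_of_isRegularLocalRing hf.toIsWeaklyRegular N hND hDfin
  exact Filter.eventually_atTop.1 <| (hη.eventually_isZero_ext_iff M).2 <|
    hDexact.mono fun n => (hD n).exactAt_iff.1
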